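/- There is an algorithm (computable function) that, given a 3CM M, an instance I over the signature of R_M, and a Boolean conjunctive query q, decides whether ⟨R_M, I⟩ ⊨ q; i.e., BCQ entailment is decidable for the concrete class C = {R_M : M a 3CM}. -/

import Mathlib

set_option maxHeartbeats 1000000
set_option synthInstance.maxHeartbeats 1000000
set_option synthInstance.maxSize 512

attribute [local instance] Classical.propDecidable

noncomputable section

/-! ### Terms and atoms -/

/-- Variables: ordinary variables `Sum.inl n`, or fresh variables `Sum.inr (c, k)`
introduced by the trigger with code `c` for the head variable with code `k`. -/
abbrev Var : Type := ℕ ⊕ (ℕ × ℕ)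

/-- Terms: constants `Sum.inl c` or variables `Sum.inr v`. -/
abbrev FTerm : Type := ℕ ⊕ Var

def ct (n : ℕ) : FTerm := Sum.inl n
def vt (n : ℕ) : FTerm := Sum.inr (Sum.inl n)

/-- An atom: a predicate name together with its list of arguments. -/
abbrev Atom : Type := ℕ × List FTerm

/-- Active domain: all terms occurring in an atom set. -/
def adom (J : Set Atom) : Set FTerm := {t | ∃ a ∈ J, t ∈ a.2}

def atomVarsF (a : Atom) : Finset Var := (a.2.filterMap Sum.getRight?).toFinset

def varsF (A : Finset Atom) : Finset Var := A.biUnion atomVarsF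

def setVars (J : Set Atom) : Set Var := {v | ∃ a ∈ J, Sum.inr v ∈ a.2}

/-! ### Substitutions and homomorphisms -/

abbrev Subst := Var → FTerm

def applyT (σ : Subst) : FTerm → FTerm
  | Sum.inl c => Sum.inl c
  | Sum.inr v => σ v

def applyA (σ : Subst) (a : Atom) : Atom := (a.1, a.2.map (applyT σ))

def IsHomOn (σ : Subst) (A B : Set Atom) : Prop := ∀ a ∈ A, applyA σ a ∈ B

def HomBetween (A B : Set Atom) : Prop := ∃ σ : Subst, IsHomOn σ A B

def IsRetraction (σ : Subst) (A B : Set Atom) : Prop :=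
  IsHomOn σ A B ∧ ∀ v ∈ setVars A ∩ setVars B, σ v = Sum.inr v

/-- Isomorphism of atom sets: a pair of mutually inverse homomorphisms. -/
def Isomorphic (A B : Set Atom) : Prop :=
  ∃ σ τ : Subst, IsHomOn σ A B ∧ IsHomOn τ B A ∧
    (∀ a ∈ A, applyA τ (applyA σ a) = a) ∧ (∀ b ∈ B, applyA σ (applyA τ b) = b)

/-! ### Rules -/

/-- A rule is a pair (body, head). Its existential variables are the head variables
not occurring in the body; its frontier the variables shared by body and head.
A rule is Datalog when every head variable occurs in the body. -/
abbrev Rule : Type := Finset Atom × Finset Atom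

def frontierOf (R : Rule) : Finset Var := varsF R.1 ∩ varsF R.2

def DatRules (Rset : Finset Rule) : Finset Rule := Rset.filter fun R => varsF R.2 ⊆ varsF R.1
def NDatRules (Rset : Finset Rule) : Finset Rule := Rset.filter fun R => ¬ varsF R.2 ⊆ varsF R.1

/-- Satisfaction of a rule in an atom set. -/
def SatisfiesRule (J : Set Atom) (R : Rule) : Prop :=
  ∀ σ : Subst, IsHomOn σ (R.1 : Set Atom) J →
    ∃ σ' : Subst, (∀ v ∈ varsF R.1, σ' v = σ v) ∧ IsHomOn σ' (R.2 : Set Atom) J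

def IsModel (Rset : Finset Rule) (I J : Set Atom) : Prop :=
  (∀ R ∈ Rset, SatisfiesRule J R) ∧ HomBetween I J

/-- BCQ entailment: every model of the KB satisfies the query. -/
def Entails (Rset : Finset Rule) (I q : Set Atom) : Prop :=
  ∀ J : Set Atom, IsModel Rset I J → HomBetween q J

def IsUniversalModel (Rset : Finset Rule) (I U : Set Atom) : Prop :=
  IsModel Rset I U ∧ ∀ J : Set Atom, IsModel Rset I J → HomBetween U J

/-! ### Triggers -/

structure Trigger where
  rule : Rule
  sub : Subst

/-- Injective code of a trigger (a trigger is determined by its rule and the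
restriction of its substitution to the body variables). -/
def Trigger.code (t : Trigger) : ℕ :=
  Encodable.encode (t.rule, (varsF t.rule.1).image fun v => (v, t.sub v))

/-- The canonical extension of the trigger substitution, mapping each existential
variable `z` to the fresh variable unique for `z` and the trigger. -/
def Trigger.extSub (t : Trigger) : Subst := fun v =>
  if v ∈ varsF t.rule.1 then t.sub v
  else Sum.inr (Sum.inr (t.code, Encodable.encode v))

def Trigger.out (t : Trigger) : Finset Atom := t.rule.2.image (applyA t.extSub)

def Trigger.isOn (t : Trigger) (J : Set Atom) : Prop := IsHomOn t.sub (t.rule.1 : Set Atom) J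

/-! ### Chase variants, derivations, chase termination classes -/

inductive ChaseVariant : Type
  | O | SO | R | E
deriving DecidableEq

def Applicable : ChaseVariant → Trigger → Set Atom → Prop
  | .O, t, J => ¬ ((t.out : Set Atom) ⊆ J)
  | .SO, t, J => ∀ t' : Trigger, t'.rule = t.rule → t'.isOn J →
      (∀ v ∈ frontierOf t.rule, t'.sub v = t.sub v) → ¬ ((t'.out : Set Atom) ⊆ J)
  | .R, t, J => ¬ ∃ σ : Subst, IsRetraction σ (J ∪ (t.out : Set Atom)) J
  | .E, t, J => ¬ ∃ σ : Subst, IsHomOn σ (J ∪ (t.out : Set Atom)) J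

def instSeq (I : Set Atom) (steps : ℕ → Option Trigger) : ℕ → Set Atom
  | 0 => I
  | n + 1 => instSeq I steps n ∪
      (match steps n with
        | none => (∅ : Set Atom)
        | some t => (t.out : Set Atom))

/-- A (possibly infinite) derivation from the knowledge base `⟨Rset, I⟩`. -/
structure Deriv (Rset : Finset Rule) (I : Set Atom) where
  steps : ℕ → Option Trigger
  prefix_closed : ∀ n, steps n = none → steps (n + 1) = none
  valid : ∀ n t, steps n = some t →
    t.rule ∈ Rset ∧ t.isOn (instSeq I steps n) ∧ ¬ ((t.out : Set Atom) ⊆ instSeq I steps n)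

def Deriv.inst {Rset : Finset Rule} {I : Set Atom} (D : Deriv Rset I) (n : ℕ) :
    Set Atom := instSeq I D.steps n

def Deriv.res {Rset : Finset Rule} {I : Set Atom} (D : Deriv Rset I) : Set Atom :=
  ⋃ n, D.inst n

def Deriv.Finite {Rset : Finset Rule} {I : Set Atom} (D : Deriv Rset I) : Prop :=
  ∃ n, D.steps n = none

def Deriv.IsX {Rset : Finset Rule} {I : Set Atom} (X : ChaseVariant)
    (D : Deriv Rset I) : Prop :=
  ∀ n t, D.steps n = some t → Applicable X t (D.inst n)

def Deriv.Fair {Rset : Finset Rule} {I : Set Atom} (X : ChaseVariant)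
    (D : Deriv Rset I) : Prop :=
  ∀ i, ∀ t : Trigger, t.rule ∈ Rset → t.isOn (D.inst i) → Applicable X t (D.inst i) →
    ∃ j, i < j ∧ ¬ Applicable X t (D.inst j)

/-- All-instance, all-derivation chase termination. -/
def CTall (X : ChaseVariant) (Rset : Finset Rule) : Prop :=
  ∀ I : Finset Atom, ∀ D : Deriv Rset (I : Set Atom), D.IsX X → D.Fair X → D.Finite

/-- All-instance, some-derivation chase termination. -/
def CTex (X : ChaseVariant) (Rset : Finset Rule) : Prop :=
  ∀ I : Finset Atom, ∃ D : Deriv Rset (I : Set Atom), D.IsX X ∧ D.Fair X ∧ D.Finite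

inductive CTQuant : Type
  | all | ex

def CT (X : ChaseVariant) : CTQuant → Finset Rule → Prop
  | .all => CTall X
  | .ex => CTex X

/-- The result of some fair `X`-derivation from `⟨Rset, J⟩`. -/
def ChX (X : ChaseVariant) (Rset : Finset Rule) (J : Set Atom) : Set Atom :=
  if h : ∃ D : Deriv Rset J, D.IsX X ∧ D.Fair X then h.choose.res else J

/-! ### Gaifman graph, treewidth, bts -/

def gaifmanAdj (J : Set Atom) (u v : FTerm) : Prop :=
  u ≠ v ∧ ∃ a ∈ J, u ∈ a.2 ∧ v ∈ a.2

/-- The (Gaifman graph of the) atom set `J` has treewidth at most `k`: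
there is a tree decomposition all of whose bags have size at most `k + 1`. -/
def TreewidthAtMost (J : Set Atom) (k : ℕ) : Prop :=
  ∃ (ι : Type) (T : SimpleGraph ι) (bag : ι → Finset FTerm),
    T.Connected ∧ T.IsAcyclic ∧
    (∀ v ∈ adom J, ∃ i, v ∈ bag i) ∧
    (∀ u v : FTerm, gaifmanAdj J u v → ∃ i, u ∈ bag i ∧ v ∈ bag i) ∧
    (∀ v : FTerm, (SimpleGraph.induce {i | v ∈ bag i} T).Preconnected) ∧
    (∀ i, (bag i).card ≤ k + 1)

/-- Bounded-treewidth sets: for every instance, some universal model of bounded treewidth. -/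
def IsBts (Rset : Finset Rule) : Prop :=
  ∀ I : Finset Atom, ∃ (k : ℕ) (U : Set Atom),
    IsUniversalModel Rset (I : Set Atom) U ∧ TreewidthAtMost U k

/-! ### Three-counter machines -/

/-- A three-counter machine: states `0, …, m − 1` (state `0` is initial, standing for `q₁`),
and a partial transition function given by a finite table. -/
structure TCM where
  m : ℕ
  hm : 0 < m
  δ : List ((ℕ × Bool × Bool) × (ℕ × Int × Int))
  keys_nodup : (δ.map Prod.fst).Nodup
  wf : ∀ e ∈ δ, e.1.1 < m ∧ e.2.1 < m ∧ e.2.2.1.natAbs ≤ 1 ∧ e.2.2.2.natAbs ≤ 1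

/-- A configuration: state, two counters, and the time counter. -/
abbrev Config : Type := ℕ × ℕ × ℕ × ℕ

def TCM.step (M : TCM) (q : ℕ) (b1 b2 : Bool) : Option (ℕ × Int × Int) :=
  (M.δ.find? fun e => decide (e.1 = (q, b1, b2))).map Prod.snd

def TCM.next (M : TCM) (C : Config) : Option Config :=
  match M.step C.1 (decide (C.2.1 ≠ 0)) (decide (C.2.2.1 ≠ 0)) with
  | none => none
  | some (q', d1, d2) =>
      some (q', ((C.2.1 : ℤ) + d1).toNat, ((C.2.2.1 : ℤ) + d2).toNat, C.2.2.2 + 1)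

def TCM.run (M : TCM) : ℕ → Option Config
  | 0 => some (0, 0, 0, 0)
  | n + 1 => (M.run n).bind M.next

/-- The machine halts: some reachable configuration has no successor. -/
def TCM.Halts (M : TCM) : Prop := ∃ n C, M.run n = some C ∧ M.next C = none

/-! ### Prime encoding of configurations -/

/-- The least prime strictly greater than `n` (computably). -/
def nextPrime (n : ℕ) : ℕ := Nat.find (Nat.exists_infinite_primes (n + 1))

/-- `prm i` is the `(i+1)`-st prime `p_{i+1}`, i.e. `prm 0 = 2`. -/
def prm : ℕ → ℕ
  | 0 => 2
  | k + 1 => nextPrime (prm k)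

/-- Encoding of a configuration as a natural number. -/
def TCM.enc (M : TCM) (C : Config) : ℕ :=
  prm C.1 * prm M.m ^ C.2.1 * prm (M.m + 1) ^ C.2.2.1 * prm (M.m + 2) ^ C.2.2.2

/-- `p = p₁ ⋯ p_{m+3}`. -/
def TCM.p (M : TCM) : ℕ := ∏ i ∈ Finset.range (M.m + 3), prm i

/-- Decode the state from a residue modulo `M.p`. -/
def TCM.stateOf (M : TCM) (i : ℕ) : Option ℕ :=
  (List.range M.m).find? fun s => decide (prm s ∣ i)

/-- The canonical pair `(q_i, r_i)` realizing the prime encoding of the transitions. -/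
def TCM.qr (M : TCM) (i : ℕ) : ℕ × ℕ :=
  match M.stateOf i with
  | none => (1, 1)
  | some s =>
      let b1 : Bool := decide (prm M.m ∣ i)
      let b2 : Bool := decide (prm (M.m + 1) ∣ i)
      match M.step s b1 b2 with
      | none => (1, 1)
      | some (s', d1, d2) =>
          let e1 : ℤ := if b1 then d1 else max d1 0
          let e2 : ℤ := if b2 then d2 else max d2 0
          let num : ℕ := prm s' * prm (M.m + 2) *
            (if e1 = 1 then prm M.m else 1) * (if e2 = 1 then prm (M.m + 1) else 1)
          let den : ℕ := prm s *
            (if e1 = -1 then prm M.m else 1) * (if e2 = -1 then prm (M.m + 1) else 1)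
          (num / Nat.gcd num den, den / Nat.gcd num den)

def TCM.qi (M : TCM) (i : ℕ) : ℕ := (M.qr i).1
def TCM.ri (M : TCM) (i : ℕ) : ℕ := (M.qr i).2

/-- `g(n) = q_{n mod p} · n / r_{n mod p}`. -/
def TCM.g (M : TCM) (n : ℕ) : ℕ := M.qi (n % M.p) * n / M.ri (n % M.p)

/-- `gᵏ(2)`. -/
def TCM.gIter (M : TCM) (k : ℕ) : ℕ := (M.g)^[k] 2

/-- `G = {gᵏ(2) : k ∈ ℕ}`. -/
def TCM.Gset (M : TCM) : Set ℕ := Set.range M.gIter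

/-! ### The rule set `R_M` -/

def pEnd : ℕ := 0
def pFlood : ℕ := 1
def pS0 : ℕ := 2
def pS : ℕ := 3
def pG : ℕ := 4
def pR (i : ℕ) : ℕ := 5 + 2 * i
def pT (i : ℕ) : ℕ := 6 + 2 * i

/-- `j`-th vertex of an `S`-path of length `n` from variable `a` to variable `b`
with fresh intermediate variables `base + 1, …, base + n − 1`. -/
def pathVar (a b base n j : ℕ) : FTerm :=
  if j = 0 then vt a else if j = n then vt b else vt (base + j)

/-- The atoms of `Sⁿ(x_a, x_b)`: an `S`-path of length `n`. -/
def spath (a b base n : ℕ) : Finset Atom :=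
  (Finset.range n).image fun j =>
    (pS, [pathVar a b base n j, pathVar a b base n (j + 1)])

/-- Rule (1): `S₀(x,y) → S(x,y)`. -/
def ruleS : Rule := ({(pS0, [vt 0, vt 1])}, {(pS, [vt 0, vt 1])})

/-- Rule (2): `R_i(x,y) ∧ S(y,z) → R_{i+1}(x,z)` (indices modulo `p`). -/
def ruleR (M : TCM) (i : ℕ) : Rule :=
  ({(pR i, [vt 0, vt 1]), (pS, [vt 1, vt 2])}, {(pR ((i + 1) % M.p), [vt 0, vt 2])})

/-- Rule (3): `T_i(x,y,z) ∧ S^{r_i}(y,y′) ∧ S^{q_i}(z,z′) → T_i(x,y′,z′)`. -/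
def ruleT (M : TCM) (i : ℕ) : Rule :=
  (({(pT i, [vt 0, vt 1, vt 2])} : Finset Atom) ∪ spath 1 3 10 (M.ri i) ∪
      spath 2 4 (11 + M.ri i) (M.qi i),
    {(pT i, [vt 0, vt 3, vt 4])})

/-- Rule (4): `S(x,y) → Flood(y)`. -/
def ruleFloodProp : Rule := ({(pS, [vt 0, vt 1])}, {(pFlood, [vt 1])})

/-- Rule (5): `End(x) → S(x,x)`. -/
def ruleSEnd : Rule := ({(pEnd, [vt 0])}, {(pS, [vt 0, vt 0])})

/-- Rule (6): `S²(x,y) → G(x,y)`. -/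
def ruleGInit : Rule := (spath 0 1 10 2, {(pG, [vt 0, vt 1])})

/-- Rule (7): `G(x,y) ∧ R_i(x,y) ∧ T_i(x,y,z) → G(x,z)`. -/
def ruleGStep (i : ℕ) : Rule :=
  ({(pG, [vt 0, vt 1]), (pR i, [vt 0, vt 1]), (pT i, [vt 0, vt 1, vt 2])},
    {(pG, [vt 0, vt 2])})

/-- Rule (8): `Flood(x) ∧ Flood(y) ∧ Flood(z) → G(x,y) ∧ ⋀_{j<p} (R_j(x,y) ∧ T_j(x,y,z))`. -/
def ruleFloodGen (M : TCM) : Rule :=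
  ({(pFlood, [vt 0]), (pFlood, [vt 1]), (pFlood, [vt 2])},
    ({(pG, [vt 0, vt 1])} : Finset Atom) ∪
      (Finset.range M.p).biUnion fun j =>
        {(pR j, [vt 0, vt 1]), (pT j, [vt 0, vt 1, vt 2])})

/-- Rule (9): `G(y,z) ∧ End(z) → ∃x (S₀(x,y) ∧ R₀(x,x) ∧ ⋀_{j<p} T_j(x,x,x))`. -/
def ruleEx (M : TCM) : Rule :=
  ({(pG, [vt 1, vt 2]), (pEnd, [vt 2])},
    ({(pS0, [vt 0, vt 1]), (pR 0, [vt 0, vt 0])} : Finset Atom) ∪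
      (Finset.range M.p).biUnion fun j => {(pT j, [vt 0, vt 0, vt 0])})

/-- The rule set `R_M`. -/
def RM (M : TCM) : Finset Rule :=
  ({ruleS, ruleFloodProp, ruleSEnd, ruleGInit, ruleFloodGen M, ruleEx M} : Finset Rule) ∪
    (Finset.range M.p).biUnion fun i => {ruleR M i, ruleT M i, ruleGStep i}

/-- The alternating Datalog/non-Datalog chase steps `Step^X_n`. -/
def StepX (X : ChaseVariant) (M : TCM) : ℕ → Set Atom → Set Atom
  | 0, I => ChX X (DatRules (RM M)) I
  | n + 1, I => ChX X (DatRules (RM M)) (ChX X (NDatRules (RM M)) (StepX X M n I))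

/-- The constant `w`, the "well of positivity". -/
def wC : FTerm := ct 0

/-- The instance `{End(w)}`. -/
def IE : Set Atom := {(pEnd, [wC])}

/-- Membership in the signature of `R_M` (predicate together with its arity). -/
def InSig (M : TCM) (a : Atom) : Prop :=
  ((a.1 = pEnd ∨ a.1 = pFlood) ∧ a.2.length = 1) ∨
  ((a.1 = pS0 ∨ a.1 = pS ∨ a.1 = pG ∨ ∃ i < M.p, a.1 = pR i) ∧ a.2.length = 2) ∨
  ((∃ i < M.p, a.1 = pT i) ∧ a.2.length = 3)

/-- The critical instance: all atoms `P(w, …, w)` over the signature of `R_M`. -/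
def Crit (M : TCM) : Set Atom := {a | InSig M a ∧ ∀ t ∈ a.2, t = wC}

/-- An `S`-path of length `k` from `s` to `t` in `J`. -/
def SPath (J : Set Atom) : ℕ → FTerm → FTerm → Prop
  | 0, s, t => s = t
  | k + 1, s, t => ∃ u, (pS, [s, u]) ∈ J ∧ SPath J k u t

/-- The restriction `J|_S`: atoms of `J` all of whose terms belong to `S`. -/
def restrictTo (J : Set Atom) (S : Set FTerm) : Set Atom := {a ∈ J | ∀ t ∈ a.2, t ∈ S}

/-- An explicit injective encoding of three-counter machines by natural numbers. -/
def encodeTCM (M : TCM) : ℕ := Encodable.encode (M.m, M.δ)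

/-!
The Skolem chase is run on natural numbers: instance terms have codes below `K`, and rule (9) puts
the witness for `y` at `y + K`, so the elements form one chain above each instance term. The chase
is the least interpretation closed under the rules and it maps into every model, hence a query is
entailed iff it holds in the chase.

Apart from atoms made by flooding, every atom of the chase relates an element to one below it on its
own chain or to an instance term. Cutting off the creation of witnesses at some height therefore
loses no atom below that height. Chains on which `Flood` holds high up can be shortened, so a query
with `k` variables that holds in the chase holds in a part of it whose height depends only on `k`.
Entailment thus amounts to the query holding in all closed interpretations on a bounded initial
segment of `ℕ`, and searching through these is primitive recursive.
-/

/-! ### Numeric interpretations -/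

/-- The natural number standing for a term in numeric interpretations. -/
def code (t : FTerm) : ℕ := Encodable.encode t

theorem code_ofNat (n : ℕ) : code (Denumerable.ofNat FTerm n) = n := Denumerable.encode_ofNat n

/-- A numeric interpretation: `A P l` says that the atom `P(l)` is present. -/
abbrev NumInterp : Type := ℕ → List ℕ → Prop

/-- The value of a term under an assignment of numbers to variables; constants denote their code. -/
def eval (s : Var → ℕ) : FTerm → ℕ
  | Sum.inl c => code (Sum.inl c)
  | Sum.inr v => s v

@[simp] theorem eval_vt (s : Var → ℕ) (n : ℕ) : eval s (vt n) = s (Sum.inl n) := rfl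

/-- Satisfaction of a conjunction of atoms in a numeric interpretation. -/
def Holds (A : NumInterp) (s : Var → ℕ) (L : List Atom) : Prop :=
  ∀ a ∈ L, A a.1 (a.2.map (eval s))

/-- The term `t` occurs in one of the atoms of `L`. -/
def Occurs (t : FTerm) (L : List Atom) : Prop := ∃ a ∈ L, t ∈ a.2

theorem mem_varsF {A : Finset Atom} {v : Var} : v ∈ varsF A ↔ ∃ a ∈ A, Sum.inr v ∈ a.2 := by
  simp [varsF, atomVarsF, Sum.getRight?_eq_some_iff]

theorem eval_congr {s s' : Var → ℕ} {t : FTerm} (h : ∀ v, t = Sum.inr v → s v = s' v) :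
    eval s t = eval s' t := by
  rcases t with c | v
  · rfl
  · exact h v rfl

theorem map_eval_congr {s s' : Var → ℕ} {l : List FTerm}
    (h : ∀ v, Sum.inr v ∈ l → s v = s' v) : l.map (eval s) = l.map (eval s') :=
  List.map_congr_left fun _ ht => eval_congr fun v hv => h v (hv ▸ ht)

theorem holds_congr {A : NumInterp} {s s' : Var → ℕ} {L : List Atom}
    (h : ∀ v, Occurs (Sum.inr v) L → s v = s' v) : Holds A s L ↔ Holds A s' L :=
  forall₂_congr fun a ha => by rw [map_eval_congr fun v hv => h v ⟨a, ha, hv⟩]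

theorem Holds.mono {A B : NumInterp} {s : Var → ℕ} {L : List Atom} (hAB : ∀ P l, A P l → B P l)
    (h : Holds A s L) : Holds B s L := fun a ha => hAB _ _ (h a ha)

theorem eval_code_comp (σ : Subst) (t : FTerm) :
    eval (fun v => code (σ v)) t = code (applyT σ t) := by
  rcases t with c | v <;> rfl

theorem map_eval_eq_applyA {h : ℕ → FTerm} {s : Var → ℕ} {a : Atom}
    (hconst : ∀ c, Sum.inl c ∈ a.2 → h (code (Sum.inl c)) = Sum.inl c) :
    (a.1, (a.2.map (eval s)).map h) = applyA (fun v => h (s v)) a := by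
  simp only [applyA, List.map_map, Prod.mk.injEq, true_and]
  refine List.map_congr_left fun t ht => ?_
  rcases t with c | v
  · exact hconst c ht
  · rfl

/-! ### Rule systems -/

/-- A rule whose body and head are listed. -/
abbrev ListRule : Type := List Atom × List Atom

/-- The existential rule with the atoms of `ρ` as body and head. -/
def toRule (ρ : ListRule) : Rule := (ρ.1.toFinset, ρ.2.toFinset)

theorem mem_varsF_toFinset {L : List Atom} {v : Var} :
    v ∈ varsF L.toFinset ↔ Occurs (Sum.inr v) L := by
  simp [mem_varsF, Occurs]

theorem satisfiesRule_toRule {J : Set Atom} {ρ : ListRule} :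
    SatisfiesRule J (toRule ρ) ↔ ∀ σ : Subst, (∀ a ∈ ρ.1, applyA σ a ∈ J) →
      ∃ σ' : Subst, (∀ v, Occurs (Sum.inr v) ρ.1 → σ' v = σ v) ∧ ∀ a ∈ ρ.2, applyA σ' a ∈ J := by
  simp only [SatisfiesRule, IsHomOn, toRule, Finset.mem_coe, List.mem_toFinset, mem_varsF_toFinset]

/-- Datalog rules together with one existential rule. The existential variable of the latter is
variable `0` and its only frontier variable is variable `1`. -/
structure RuleSystem where
  datalog : List ListRule
  exRule : ListRule

/-- The rule set of `Γ`. -/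
def RuleSystem.toFinset (Γ : RuleSystem) : Finset Rule :=
  insert (toRule Γ.exRule) (Γ.datalog.map toRule).toFinset

/-- The rules are free of constants and their variables are as announced in `RuleSystem`. -/
structure RuleSystem.WellFormed (Γ : RuleSystem) : Prop where
  datalog_body : ∀ ρ ∈ Γ.datalog, ∀ t, Occurs t ρ.1 → ∃ v, t = Sum.inr v
  datalog_head : ∀ ρ ∈ Γ.datalog, ∀ t, Occurs t ρ.2 → Occurs t ρ.1
  exRule_body : ∀ t, Occurs t Γ.exRule.1 → ∃ v, v ≠ Sum.inl 0 ∧ t = Sum.inr v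
  exRule_frontier : Occurs (vt 1) Γ.exRule.1
  exRule_head : ∀ t, Occurs t Γ.exRule.2 → t = vt 0 ∨ t = vt 1

theorem RuleSystem.forall_satisfiesRule_iff {Γ : RuleSystem} {J : Set Atom} :
    (∀ R ∈ Γ.toFinset, SatisfiesRule J R) ↔
      SatisfiesRule J (toRule Γ.exRule) ∧ ∀ ρ ∈ Γ.datalog, SatisfiesRule J (toRule ρ) := by
  simp only [RuleSystem.toFinset, Finset.forall_mem_insert, List.mem_toFinset, List.forall_mem_map]

/-! ### The Skolem chase -/

/-- The Skolem chase on natural numbers, where the witness created for `y` is `y + K`. Witnesses are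
only created for those `y` that satisfy `L`. -/
inductive Chase (Γ : RuleSystem) (I : Finset Atom) (K : ℕ) (L : ℕ → Prop) : NumInterp
  | fact {a : Atom} : a ∈ I → Chase Γ I K L a.1 (a.2.map code)
  | datalog {ρ : ListRule} {s : Var → ℕ} {a : Atom} : ρ ∈ Γ.datalog →
      (∀ b ∈ ρ.1, Chase Γ I K L b.1 (b.2.map (eval s))) → a ∈ ρ.2 →
      Chase Γ I K L a.1 (a.2.map (eval s))
  | skolem {s : Var → ℕ} {a : Atom} : L (s (Sum.inl 1)) → s (Sum.inl 0) = s (Sum.inl 1) + K →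
      (∀ b ∈ Γ.exRule.1, Chase Γ I K L b.1 (b.2.map (eval s))) → a ∈ Γ.exRule.2 →
      Chase Γ I K L a.1 (a.2.map (eval s))

/-- The chase in which witnesses are created for all numbers. -/
abbrev FullChase (Γ : RuleSystem) (I : Finset Atom) (K : ℕ) : NumInterp :=
  Chase Γ I K fun _ => True

/-- `A` is closed under the datalog rules and the Skolemized existential rule of `Γ`, as far as
assignments with values in `D` are concerned. -/
structure ClosedOn (Γ : RuleSystem) (K : ℕ) (D L : ℕ → Prop) (A : NumInterp) : Prop where
  datalog : ∀ ρ ∈ Γ.datalog, ∀ s : Var → ℕ, (∀ v, D (s v)) → Holds A s ρ.1 → Holds A s ρ.2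
  skolem : ∀ s : Var → ℕ, (∀ v, D (s v)) → L (s (Sum.inl 1)) →
    s (Sum.inl 0) = s (Sum.inl 1) + K → Holds A s Γ.exRule.1 → Holds A s Γ.exRule.2

section Chase

variable {Γ : RuleSystem} {I : Finset Atom} {K : ℕ} {D L : ℕ → Prop} {A : NumInterp}

theorem Chase.closedOn : ClosedOn Γ K D L (Chase Γ I K L) :=
  ⟨fun _ hρ _ _ hb _ ha => .datalog hρ hb ha, fun _ _ hL hs hb _ ha => .skolem hL hs hb ha⟩

theorem Chase.mono {L' : ℕ → Prop} (hL : ∀ y, L y → L' y) {P : ℕ} {l : List ℕ}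
    (h : Chase Γ I K L P l) : Chase Γ I K L' P l := by
  induction h with
  | fact ha => exact .fact ha
  | datalog hρ _ ha ih => exact .datalog hρ ih ha
  | skolem hLs hs _ ha ih => exact .skolem (hL _ hLs) hs ih ha

theorem Chase.forall_mem {p : ℕ → Prop} (hΓ : Γ.WellFormed) (hfact : ∀ a ∈ I, ∀ t ∈ a.2, p (code t))
    (hstep : ∀ s : Var → ℕ, L (s (Sum.inl 1)) → s (Sum.inl 0) = s (Sum.inl 1) + K →
      Holds (Chase Γ I K L) s Γ.exRule.1 → p (s (Sum.inl 1)) → p (s (Sum.inl 0)))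
    {P : ℕ} {l : List ℕ} (h : Chase Γ I K L P l) : ∀ n ∈ l, p n := by
  induction h with
  | fact ha => exact List.forall_mem_map.2 (hfact _ ha)
  | @datalog ρ s a hρ _ ha ih =>
    refine List.forall_mem_map.2 fun t ht => ?_
    obtain ⟨b, hb, htb⟩ := hΓ.datalog_head ρ hρ t ⟨a, ha, ht⟩
    exact ih b hb _ (List.mem_map_of_mem htb)
  | @skolem s a hL hs hb ha ih =>
    obtain ⟨b, hb1, hvb⟩ := hΓ.exRule_frontier
    have hp1 : p (s (Sum.inl 1)) := ih b hb1 _ (List.mem_map_of_mem hvb)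
    refine List.forall_mem_map.2 fun t ht => ?_
    rcases hΓ.exRule_head t ⟨a, ha, ht⟩ with rfl | rfl
    exacts [hstep s hL hs hb hp1, hp1]

/-- The chase is contained in every interpretation that contains the facts and is closed under the
rules, even if closure is only known for assignments in a set containing the elements of the
chase. -/
theorem Chase.of_closedOn (hΓ : Γ.WellFormed) (hA : ClosedOn Γ K D L A) (hD0 : D 0)
    (hDI : ∀ a ∈ I, ∀ t ∈ a.2, D (code t)) (hDK : ∀ y, L y → D y → D (y + K))
    (hI : ∀ a ∈ I, A a.1 (a.2.map code)) {P : ℕ} {l : List ℕ} (h : Chase Γ I K L P l) : A P l := by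
  have hD {P l} (h : Chase Γ I K L P l) : ∀ n ∈ l, D n :=
    h.forall_mem hΓ hDI fun s hLs hs _ hD1 => hs ▸ hDK _ hLs hD1
  have hDbody {s B} (hB : Holds (Chase Γ I K L) s B) {v} (hv : Occurs (Sum.inr v) B) : D (s v) :=
    let ⟨b, hb, hvb⟩ := hv
    hD (hB b hb) _ (List.mem_map_of_mem (f := eval s) hvb)
  induction h with
  | fact ha => exact hI _ ha
  | @datalog ρ s a hρ hb ha ih =>
    let s' : Var → ℕ := fun v => if Occurs (Sum.inr v) ρ.1 then s v else 0
    have hs' : ∀ v, Occurs (Sum.inr v) ρ.1 → s v = s' v := fun v hv => (if_pos hv).symm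
    have hDs' : ∀ v, D (s' v) := fun v => by
      by_cases hv : Occurs (Sum.inr v) ρ.1
      · exact hs' v hv ▸ hDbody hb hv
      · simpa only [s', if_neg hv] using hD0
    rw [map_eval_congr fun v hv => hs' v (hΓ.datalog_head ρ hρ _ ⟨a, ha, hv⟩)]
    exact hA.datalog ρ hρ s' hDs' ((holds_congr hs').1 ih) a ha
  | @skolem s a hLs hs hb ha ih =>
    let s' : Var → ℕ := fun v =>
      if v = Sum.inl 0 ∨ Occurs (Sum.inr v) Γ.exRule.1 then s v else 0
    have hs' : ∀ v, v = Sum.inl 0 ∨ Occurs (Sum.inr v) Γ.exRule.1 → s v = s' v :=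
      fun v hv => (if_pos hv).symm
    have hs0 := hs' _ (.inl rfl)
    have hs1 := hs' _ (.inr hΓ.exRule_frontier)
    have hDs' : ∀ v, D (s' v) := fun v => by
      by_cases hv : v = Sum.inl 0 ∨ Occurs (Sum.inr v) Γ.exRule.1
      · rw [← hs' v hv]
        rcases hv with rfl | hv
        · exact hs ▸ hDK _ hLs (hDbody hb hΓ.exRule_frontier)
        · exact hDbody hb hv
      · simpa only [s', if_neg hv] using hD0
    rw [map_eval_congr (s' := s') fun v hv => hs' v (by
      rcases hΓ.exRule_head _ ⟨a, ha, hv⟩ with h | h <;> cases h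
      exacts [.inl rfl, .inr hΓ.exRule_frontier])]
    exact hA.skolem s' hDs' (hs1 ▸ hLs) (hs0 ▸ hs1 ▸ hs)
      ((holds_congr fun v hv => hs' v (.inr hv)).1 ih) a ha

end Chase

/-! ### Universality of the chase -/

section Universality

variable {Γ : RuleSystem} {I : Finset Atom} {K : ℕ}

/-- The full chase as a set of atoms. -/
def chaseModel (Γ : RuleSystem) (I : Finset Atom) (K : ℕ) : Set Atom :=
  {a | FullChase Γ I K a.1 (a.2.map code)}

theorem applyA_mem_chaseModel {σ : Subst} {a : Atom} :
    applyA σ a ∈ chaseModel Γ I K ↔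
      FullChase Γ I K a.1 (a.2.map (eval fun v => code (σ v))) := by
  have : (applyA σ a).2.map code = a.2.map (eval fun v => code (σ v)) := by
    simp [applyA, Function.comp_def, eval_code_comp]
  rw [← this]
  rfl

theorem chaseModel_satisfies_exRule (hΓ : Γ.WellFormed) :
    SatisfiesRule (chaseModel Γ I K) (toRule Γ.exRule) := by
  refine satisfiesRule_toRule.2 fun σ hσ => ?_
  let σ' : Subst := fun v =>
    if v = Sum.inl 0 then Denumerable.ofNat FTerm (code (σ (Sum.inl 1)) + K) else σ v
  have hagree : ∀ v, Occurs (Sum.inr v) Γ.exRule.1 → σ' v = σ v := fun v hv => by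
    obtain ⟨w, hw0, hw⟩ := hΓ.exRule_body _ hv
    cases hw
    exact if_neg hw0
  refine ⟨σ', hagree, fun a ha => applyA_mem_chaseModel.2 ?_⟩
  refine .skolem trivial ?_ (fun b hb => ?_) ha
  · simp [σ', code_ofNat]
  · rw [map_eval_congr (s' := fun v => code (σ v)) fun v hv => congrArg code (hagree v ⟨b, hb, hv⟩)]
    exact applyA_mem_chaseModel.1 (hσ b hb)

theorem isModel_chaseModel (hΓ : Γ.WellFormed) :
    IsModel Γ.toFinset (I : Set Atom) (chaseModel Γ I K) := by
  refine ⟨RuleSystem.forall_satisfiesRule_iff.2 ⟨chaseModel_satisfies_exRule hΓ, fun ρ hρ => ?_⟩,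
    Sum.inr, fun a ha => applyA_mem_chaseModel.2 ?_⟩
  · refine satisfiesRule_toRule.2 fun σ hσ => ⟨σ, fun _ _ => rfl, fun a ha => ?_⟩
    exact applyA_mem_chaseModel.2
      (.datalog hρ (fun b hb => applyA_mem_chaseModel.1 (hσ b hb)) ha)
  · have : eval (fun v => code (Sum.inr v)) = code := funext fun t => by rcases t with c | v <;> rfl
    rw [this]
    exact .fact ha

/-- The map sending a number below `K` to the image under `h₀` of the term it codes, and the chase
witness `n + K` to the witness `w` chooses for the image of `n`. -/
def chaseHom (h₀ : Subst) (w : FTerm → FTerm) (K n : ℕ) : FTerm :=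
  w^[n / K] (applyT h₀ (Denumerable.ofNat FTerm (n % K)))

theorem chaseHom_add (h₀ : Subst) (w : FTerm → FTerm) (hK : 0 < K) (n : ℕ) :
    chaseHom h₀ w K (n + K) = w (chaseHom h₀ w K n) := by
  simp [chaseHom, Nat.add_div_right n hK, Function.iterate_succ_apply']

theorem chaseHom_code (h₀ : Subst) (w : FTerm → FTerm) {t : FTerm} (h : code t < K) :
    chaseHom h₀ w K (code t) = applyT h₀ t := by
  rw [chaseHom, Nat.div_eq_of_lt h, Nat.mod_eq_of_lt h]
  exact congrArg (applyT h₀) (Denumerable.ofNat_encode t)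

theorem exists_witness {J : Set Atom} (hΓ : Γ.WellFormed)
    (hJ : SatisfiesRule J (toRule Γ.exRule)) (y : FTerm) :
    ∃ x, ∀ σ : Subst, σ (Sum.inl 0) = x → σ (Sum.inl 1) = y →
      (∀ a ∈ Γ.exRule.1, applyA σ a ∈ J) → ∀ a ∈ Γ.exRule.2, applyA σ a ∈ J := by
  by_cases hy : ∃ σ : Subst, σ (Sum.inl 1) = y ∧ ∀ a ∈ Γ.exRule.1, applyA σ a ∈ J
  · obtain ⟨τ, hτy, hτ⟩ := hy
    obtain ⟨τ', hagree, hhead⟩ := satisfiesRule_toRule.1 hJ τ hτ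
    refine ⟨τ' (Sum.inl 0), fun σ h0 h1 _ a ha => ?_⟩
    have : applyA σ a = applyA τ' a := by
      refine Prod.ext rfl (List.map_congr_left fun t ht => ?_)
      rcases hΓ.exRule_head t ⟨a, ha, ht⟩ with rfl | rfl
      · exact h0
      · exact h1.trans (hτy.symm.trans (hagree _ hΓ.exRule_frontier).symm)
    exact this ▸ hhead a ha
  · exact ⟨y, fun σ _ h1 hb => absurd ⟨σ, h1, hb⟩ hy⟩

theorem exists_hom_of_isModel (hΓ : Γ.WellFormed) (hK : 0 < K)
    (hI : ∀ a ∈ I, ∀ t ∈ a.2, code t < K) {J : Set Atom}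
    (hJ : IsModel Γ.toFinset (I : Set Atom) J) :
    ∃ h : ℕ → FTerm, (∀ c, code (Sum.inl c) < K → h (code (Sum.inl c)) = Sum.inl c) ∧
      ∀ P l, FullChase Γ I K P l → (P, l.map h) ∈ J := by
  obtain ⟨hsat, h₀, hh₀⟩ := hJ
  obtain ⟨hex, hdat⟩ := RuleSystem.forall_satisfiesRule_iff.1 hsat
  choose w hw using exists_witness hΓ hex
  let h := chaseHom h₀ w K
  have happ {s : Var → ℕ} {a : Atom} (ha : ∀ t ∈ a.2, ∃ v, t = Sum.inr v) :
      (a.1, (a.2.map (eval s)).map h) = applyA (fun v => h (s v)) a :=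
    map_eval_eq_applyA fun c hc => by obtain ⟨v, hv⟩ := ha _ hc; cases hv
  have hclosed : ClosedOn Γ K (fun _ => True) (fun _ => True) fun P l => (P, l.map h) ∈ J := by
    refine ⟨fun ρ hρ s _ hb a ha => ?_, fun s _ _ hs hb a ha => ?_⟩
    · have hvar := hΓ.datalog_body ρ hρ
      obtain ⟨σ', hagree, hhead⟩ := satisfiesRule_toRule.1 (hdat ρ hρ) (fun v => h (s v))
        fun b hb' => happ (fun t ht => hvar t ⟨b, hb', ht⟩) ▸ hb b hb'
      have hocc := fun t ht => hΓ.datalog_head ρ hρ t ⟨a, ha, ht⟩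
      have : applyA (fun v => h (s v)) a = applyA σ' a := by
        refine Prod.ext rfl (List.map_congr_left fun t ht => ?_)
        obtain ⟨v, rfl⟩ := hvar t (hocc t ht)
        exact (hagree v (hocc _ ht)).symm
      rw [happ fun t ht => hvar t (hocc t ht), this]
      exact hhead a ha
    · rw [happ fun t ht => (hΓ.exRule_head t ⟨a, ha, ht⟩).elim (⟨_, ·⟩) (⟨_, ·⟩)]
      refine hw (h (s (Sum.inl 1))) _ (by rw [hs]; exact chaseHom_add h₀ w hK _) rfl
        (fun b hb' => ?_) a ha
      rw [← happ fun t ht => (hΓ.exRule_body t ⟨b, hb', ht⟩).imp fun _ => And.right]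
      exact hb b hb'
  refine ⟨h, fun c hc => chaseHom_code h₀ w hc, fun P l hPl =>
    hPl.of_closedOn hΓ hclosed trivial (fun _ _ _ _ => trivial) (fun _ _ _ => trivial) ?_⟩
  intro a ha
  have : (a.2.map code).map h = a.2.map (applyT h₀) := by
    rw [List.map_map]
    exact List.map_congr_left fun t ht => chaseHom_code h₀ w (hI a ha t ht)
  exact this ▸ hh₀ a ha

/-- The chase is a universal model, so entailment is matching into the chase. -/
theorem entails_iff_fullChase {q : Finset Atom} (hΓ : Γ.WellFormed) (hK : 0 < K)
    (hI : ∀ a ∈ I, ∀ t ∈ a.2, code t < K) (hq : ∀ a ∈ q, ∀ t ∈ a.2, code t < K) :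
    Entails Γ.toFinset (I : Set Atom) (q : Set Atom) ↔
      ∃ s : Var → ℕ, ∀ a ∈ q, FullChase Γ I K a.1 (a.2.map (eval s)) := by
  constructor
  · intro h
    obtain ⟨σ, hσ⟩ := h _ (isModel_chaseModel (K := K) hΓ)
    exact ⟨fun v => code (σ v), fun a ha => applyA_mem_chaseModel.1 (hσ a ha)⟩
  · rintro ⟨s, hs⟩ J hJ
    obtain ⟨h, hconst, hhom⟩ := exists_hom_of_isModel hΓ hK hI hJ
    refine ⟨fun v => h (s v), fun a ha => ?_⟩
    rw [← map_eval_eq_applyA fun c hc => hconst c (hq a ha _ hc)]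
    exact hhom _ _ (hs a ha)

end Universality

/-! ### The rule set `R_M` as a rule system -/

/-- The atoms of `Sⁿ(a, b)` in order along the path, unlike the set `spath`. -/
def listSPath (a b base n : ℕ) : List Atom :=
  (List.range n).map fun j => (pS, [pathVar a b base n j, pathVar a b base n (j + 1)])

/-- Rule (1). -/
def listRuleS : ListRule := ([(pS0, [vt 0, vt 1])], [(pS, [vt 0, vt 1])])

/-- Rule (2). -/
def listRuleR (p i : ℕ) : ListRule :=
  ([(pR i, [vt 0, vt 1]), (pS, [vt 1, vt 2])], [(pR ((i + 1) % p), [vt 0, vt 2])])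

/-- Rule (3). -/
def listRuleT (r q i : ℕ) : ListRule :=
  ((pT i, [vt 0, vt 1, vt 2]) :: (listSPath 1 3 10 r ++ listSPath 2 4 (11 + r) q),
    [(pT i, [vt 0, vt 3, vt 4])])

/-- Rule (4). -/
def listRuleFloodProp : ListRule := ([(pS, [vt 0, vt 1])], [(pFlood, [vt 1])])

/-- Rule (5). -/
def listRuleSEnd : ListRule := ([(pEnd, [vt 0])], [(pS, [vt 0, vt 0])])

/-- Rule (6). -/
def listRuleGInit : ListRule :=
  ([(pS, [vt 0, vt 11]), (pS, [vt 11, vt 1])], [(pG, [vt 0, vt 1])])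

/-- Rule (7). -/
def listRuleGStep (i : ℕ) : ListRule :=
  ([(pG, [vt 0, vt 1]), (pR i, [vt 0, vt 1]), (pT i, [vt 0, vt 1, vt 2])], [(pG, [vt 0, vt 2])])

/-- Rule (8). -/
def listRuleFloodGen (p : ℕ) : ListRule :=
  ([(pFlood, [vt 0]), (pFlood, [vt 1]), (pFlood, [vt 2])],
    (pG, [vt 0, vt 1]) ::
      (List.range p).flatMap fun j => [(pR j, [vt 0, vt 1]), (pT j, [vt 0, vt 1, vt 2])])

/-- Rule (9). -/
def listRuleEx (p : ℕ) : ListRule :=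
  ([(pG, [vt 1, vt 2]), (pEnd, [vt 2])],
    (pS0, [vt 0, vt 1]) :: (pR 0, [vt 0, vt 0]) ::
      (List.range p).map fun j => (pT j, [vt 0, vt 0, vt 0]))

/-- The rules (1)–(9) for arbitrary parameters `p`, `r_i` and `q_i`. -/
def ruleSystem (p : ℕ) (r q : ℕ → ℕ) : RuleSystem where
  datalog := listRuleS :: listRuleFloodProp :: listRuleSEnd :: listRuleGInit ::
    listRuleFloodGen p ::
      (List.range p).flatMap fun i => [listRuleR p i, listRuleT (r i) (q i) i, listRuleGStep i]
  exRule := listRuleEx p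

theorem forall_mem_datalog_ruleSystem {p : ℕ} {r q : ℕ → ℕ} {φ : ListRule → Prop} :
    (∀ ρ ∈ (ruleSystem p r q).datalog, φ ρ) ↔
      φ listRuleS ∧ φ listRuleFloodProp ∧ φ listRuleSEnd ∧ φ listRuleGInit ∧
      φ (listRuleFloodGen p) ∧
      ∀ i < p, φ (listRuleR p i) ∧ φ (listRuleT (r i) (q i) i) ∧ φ (listRuleGStep i) := by
  simp only [ruleSystem, List.forall_mem_cons, List.forall_mem_flatMap, List.mem_range,
    List.not_mem_nil, false_imp_iff, implies_true, and_true]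

theorem toRule_listRuleS : toRule listRuleS = ruleS := by
  ext <;> simp [toRule, listRuleS, ruleS]

theorem toRule_listRuleFloodProp : toRule listRuleFloodProp = ruleFloodProp := by
  ext <;> simp [toRule, listRuleFloodProp, ruleFloodProp]

theorem toRule_listRuleSEnd : toRule listRuleSEnd = ruleSEnd := by
  ext <;> simp [toRule, listRuleSEnd, ruleSEnd]

theorem toRule_listRuleGInit : toRule listRuleGInit = ruleGInit := by
  ext <;> simp [toRule, listRuleGInit, ruleGInit, spath, Finset.range_add_one, pathVar, or_comm]

theorem toRule_listRuleR (M : TCM) (i : ℕ) : toRule (listRuleR M.p i) = ruleR M i := by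
  ext <;> simp [toRule, listRuleR, ruleR]

theorem toRule_listRuleT (M : TCM) (i : ℕ) :
    toRule (listRuleT (M.ri i) (M.qi i) i) = ruleT M i := by
  ext <;> simp [toRule, listRuleT, ruleT, spath, listSPath]

theorem toRule_listRuleGStep (i : ℕ) : toRule (listRuleGStep i) = ruleGStep i := by
  ext <;> simp [toRule, listRuleGStep, ruleGStep]

theorem toRule_listRuleFloodGen (M : TCM) : toRule (listRuleFloodGen M.p) = ruleFloodGen M := by
  ext <;> simp [toRule, listRuleFloodGen, ruleFloodGen]

theorem toRule_listRuleEx (M : TCM) : toRule (listRuleEx M.p) = ruleEx M := by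
  ext <;> simp [toRule, listRuleEx, ruleEx, eq_comm]

theorem toFinset_ruleSystem (M : TCM) : (ruleSystem M.p M.ri M.qi).toFinset = RM M := by
  ext R
  simp only [RuleSystem.toFinset, RM, ruleSystem, List.map_cons, List.map_flatMap, List.map_nil,
    toRule_listRuleS, toRule_listRuleFloodProp, toRule_listRuleSEnd, toRule_listRuleGInit,
    toRule_listRuleR, toRule_listRuleT, toRule_listRuleGStep, toRule_listRuleFloodGen,
    toRule_listRuleEx, Finset.mem_insert, Finset.mem_union, Finset.mem_biUnion, List.mem_toFinset,
    List.mem_cons, List.mem_flatMap, List.mem_range, Finset.mem_range, Finset.mem_singleton,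
    List.not_mem_nil, or_false, or_assoc, or_left_comm (a := R = ruleEx M)]

theorem prm_pos : ∀ k, 0 < prm k
  | 0 => two_pos
  | k + 1 => (Nat.find_spec (Nat.exists_infinite_primes (prm k + 1))).2.pos

theorem p_pos (M : TCM) : 0 < M.p := Finset.prod_pos fun i _ => prm_pos i

theorem qr_pos (M : TCM) (i : ℕ) : 0 < (M.qr i).1 ∧ 0 < (M.qr i).2 := by
  have prm_ite_pos (c : Prop) [Decidable c] (k : ℕ) : 0 < if c then prm k else 1 := by
    split_ifs
    exacts [prm_pos k, one_pos]
  have reduced_pos {a b : ℕ} (ha : 0 < a) (hb : 0 < b) :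
      0 < a / Nat.gcd a b ∧ 0 < b / Nat.gcd a b :=
    ⟨Nat.div_gcd_pos_of_pos_left b ha, Nat.div_gcd_pos_of_pos_right a hb⟩
  unfold TCM.qr
  split
  · exact ⟨one_pos, one_pos⟩
  · dsimp only
    split
    · exact ⟨one_pos, one_pos⟩
    · exact reduced_pos
        (mul_pos (mul_pos (mul_pos (prm_pos _) (prm_pos _)) (prm_ite_pos _ _)) (prm_ite_pos _ _))
        (mul_pos (mul_pos (prm_pos _) (prm_ite_pos _ _)) (prm_ite_pos _ _))

theorem occurs_cons {t : FTerm} {a : Atom} {L : List Atom} :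
    Occurs t (a :: L) ↔ t ∈ a.2 ∨ Occurs t L := by
  simp [Occurs]

theorem occurs_append {t : FTerm} {L L' : List Atom} :
    Occurs t (L ++ L') ↔ Occurs t L ∨ Occurs t L' := by
  simp [Occurs, or_and_right, exists_or]

theorem not_occurs_nil {t : FTerm} : ¬ Occurs t [] := by simp [Occurs]

theorem exists_var_of_occurs_listSPath {a b base n : ℕ} {t : FTerm}
    (h : Occurs t (listSPath a b base n)) : ∃ v, t = Sum.inr v := by
  have pathVar_eq (j : ℕ) : ∃ v, pathVar a b base n j = Sum.inr v := by
    unfold pathVar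
    split_ifs
    exacts [⟨_, rfl⟩, ⟨_, rfl⟩, ⟨_, rfl⟩]
  obtain ⟨x, hx, ht⟩ := h
  obtain ⟨j, -, rfl⟩ := List.mem_map.1 hx
  simp only [List.mem_cons, List.not_mem_nil, or_false] at ht
  rcases ht with rfl | rfl
  exacts [pathVar_eq _, pathVar_eq _]

theorem occurs_listSPath_target {a b base n : ℕ} (hn : 0 < n) :
    Occurs (vt b) (listSPath a b base n) := by
  obtain ⟨m, rfl⟩ := Nat.exists_eq_succ_of_ne_zero hn.ne'
  exact ⟨_, List.mem_map_of_mem (List.mem_range.2 m.lt_succ_self), by simp [pathVar]⟩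

theorem exists_var_of_occurs_body_listRuleT {r q i : ℕ} {t : FTerm}
    (h : Occurs t (listRuleT r q i).1) : ∃ v, t = Sum.inr v := by
  simp only [listRuleT, occurs_cons, occurs_append, List.mem_cons, List.not_mem_nil,
    or_false] at h
  rcases h with (rfl | rfl | rfl) | h | h
  exacts [⟨_, rfl⟩, ⟨_, rfl⟩, ⟨_, rfl⟩, exists_var_of_occurs_listSPath h,
    exists_var_of_occurs_listSPath h]

theorem occurs_body_of_occurs_head_listRuleT {r q i : ℕ} (hr : 0 < r) (hq : 0 < q) {t : FTerm}
    (h : Occurs t (listRuleT r q i).2) : Occurs t (listRuleT r q i).1 := by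
  simp only [listRuleT, occurs_cons, not_occurs_nil, List.mem_cons, List.not_mem_nil,
    or_false] at h
  simp only [listRuleT, occurs_cons, occurs_append]
  rcases h with rfl | rfl | rfl
  exacts [.inl (by simp), .inr (.inl (occurs_listSPath_target hr)),
    .inr (.inr (occurs_listSPath_target hq))]

theorem occurs_listRuleFloodGen {p : ℕ} {t : FTerm} (h : Occurs t (listRuleFloodGen p).2) :
    t = vt 0 ∨ t = vt 1 ∨ t = vt 2 := by
  obtain ⟨a, ha, ht⟩ := h
  simp only [listRuleFloodGen, List.mem_cons, List.mem_flatMap, List.not_mem_nil, or_false] at ha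
  rcases ha with rfl | ⟨j, -, rfl | rfl⟩ <;>
    simp only [List.mem_cons, List.not_mem_nil, or_false] at ht <;> tauto

theorem wellFormed_ruleSystem {p : ℕ} {r q : ℕ → ℕ} (hr : ∀ i, 0 < r i) (hq : ∀ i, 0 < q i) :
    (ruleSystem p r q).WellFormed where
  datalog_body := by
    refine forall_mem_datalog_ruleSystem.2 ⟨?_, ?_, ?_, ?_, ?_,
      fun i _ => ⟨?_, fun t => exists_var_of_occurs_body_listRuleT, ?_⟩⟩ <;>
    simp [listRuleS, listRuleFloodProp, listRuleSEnd, listRuleGInit, listRuleFloodGen, listRuleR,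
      listRuleGStep, occurs_cons, not_occurs_nil, vt]
  datalog_head := by
    refine forall_mem_datalog_ruleSystem.2 ⟨?_, ?_, ?_, ?_, fun t ht => ?_,
      fun i _ => ⟨?_, fun t => occurs_body_of_occurs_head_listRuleT (hr i) (hq i), ?_⟩⟩ <;>
    simp only [listRuleS, listRuleFloodProp, listRuleSEnd, listRuleGInit, listRuleFloodGen,
      listRuleR, listRuleGStep, occurs_cons, not_occurs_nil, List.mem_cons, List.not_mem_nil,
      or_false] <;>
    first | tauto | exact (occurs_listRuleFloodGen ht).imp id (.imp id id)
  exRule_body t ht := by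
    simp only [ruleSystem, listRuleEx, occurs_cons, not_occurs_nil, List.mem_cons,
      List.not_mem_nil, or_false] at ht
    rcases ht with (rfl | rfl) | rfl
    exacts [⟨_, by simp, rfl⟩, ⟨_, by simp, rfl⟩, ⟨_, by simp, rfl⟩]
  exRule_frontier := occurs_cons.2 (.inl (by simp))
  exRule_head t ht := by
    obtain ⟨a, ha, ht⟩ := ht
    simp only [ruleSystem, listRuleEx, List.mem_cons, List.mem_map] at ha
    rcases ha with rfl | rfl | ⟨j, -, rfl⟩ <;>
      simp only [List.mem_cons, List.not_mem_nil, or_false, or_self] at ht <;> tauto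

/-! ### Interpretations of the signature of `R_M` -/

/-- An interpretation of the predicates of `R_M`, with typed arities. -/
structure Interp where
  End : ℕ → Prop
  Flood : ℕ → Prop
  S₀ : ℕ → ℕ → Prop
  S : ℕ → ℕ → Prop
  G : ℕ → ℕ → Prop
  R : ℕ → ℕ → ℕ → Prop
  T : ℕ → ℕ → ℕ → ℕ → Prop

/-- Closure under the rules (1)–(9) with parameters `p`, `r` and `q`; the existential rule is
Skolemized as in `Chase`. -/
structure Interp.Closed (p : ℕ) (r q : ℕ → ℕ) (K : ℕ) (L : ℕ → Prop) (X : Interp) : Prop where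
  ruleS : ∀ {x y}, X.S₀ x y → X.S x y
  ruleR : ∀ {i x y z}, i < p → X.R i x y → X.S y z → X.R ((i + 1) % p) x z
  ruleT : ∀ {i x} {f g : ℕ → ℕ}, i < p → X.T i x (f 0) (g 0) →
    (∀ j < r i, X.S (f j) (f (j + 1))) → (∀ j < q i, X.S (g j) (g (j + 1))) →
    X.T i x (f (r i)) (g (q i))
  ruleFloodProp : ∀ {x y}, X.S x y → X.Flood y
  ruleSEnd : ∀ {x}, X.End x → X.S x x
  ruleGInit : ∀ {x y z}, X.S x y → X.S y z → X.G x z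
  ruleGStep : ∀ {i x y z}, i < p → X.G x y → X.R i x y → X.T i x y z → X.G x z
  ruleFloodGen : ∀ {x y z}, X.Flood x → X.Flood y → X.Flood z →
    X.G x y ∧ ∀ i < p, X.R i x y ∧ X.T i x y z
  ruleEx : ∀ {y z}, L y → X.G y z → X.End z →
    X.S₀ (y + K) y ∧ X.R 0 (y + K) (y + K) ∧ ∀ i < p, X.T i (y + K) (y + K) (y + K)

/-- The typed part of a numeric interpretation. -/
def Interp.ofNum (A : NumInterp) : Interp where
  End x := A pEnd [x]
  Flood x := A pFlood [x]
  S₀ x y := A pS0 [x, y]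
  S x y := A pS [x, y]
  G x y := A pG [x, y]
  R i x y := A (pR i) [x, y]
  T i x y z := A (pT i) [x, y, z]

/-- The numeric interpretation without atoms outside the signature of `R_M`. -/
def Interp.toNum (p : ℕ) (X : Interp) (P : ℕ) : List ℕ → Prop
  | [x] => P = pEnd ∧ X.End x ∨ P = pFlood ∧ X.Flood x
  | [x, y] => P = pS0 ∧ X.S₀ x y ∨ P = pS ∧ X.S x y ∨ P = pG ∧ X.G x y ∨
      ∃ i < p, P = pR i ∧ X.R i x y
  | [x, y, z] => ∃ i < p, P = pT i ∧ X.T i x y z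
  | _ => False

section Interp

variable {p K : ℕ} {r q : ℕ → ℕ} {L : ℕ → Prop} {X : Interp} {A : NumInterp} {i x y z : ℕ}

theorem toNum_pEnd : X.toNum p pEnd [x] ↔ X.End x := by simp [Interp.toNum, pEnd, pFlood]

theorem toNum_pFlood : X.toNum p pFlood [x] ↔ X.Flood x := by simp [Interp.toNum, pEnd, pFlood]

theorem toNum_pS0 : X.toNum p pS0 [x, y] ↔ X.S₀ x y := by
  grind [Interp.toNum, pS0, pS, pG, pR]

theorem toNum_pS : X.toNum p pS [x, y] ↔ X.S x y := by
  grind [Interp.toNum, pS0, pS, pG, pR]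

theorem toNum_pG : X.toNum p pG [x, y] ↔ X.G x y := by
  grind [Interp.toNum, pS0, pS, pG, pR]

theorem toNum_pR (hi : i < p) : X.toNum p (pR i) [x, y] ↔ X.R i x y := by
  have pR_inj {j : ℕ} : pR i = pR j ↔ i = j := by simp [pR]
  grind [Interp.toNum, pS0, pS, pG, pR]

theorem toNum_pT (hi : i < p) : X.toNum p (pT i) [x, y, z] ↔ X.T i x y z := by
  grind [Interp.toNum, pT]

theorem holds_cons {s : Var → ℕ} {a : Atom} {B : List Atom} :
    Holds A s (a :: B) ↔ A a.1 (a.2.map (eval s)) ∧ Holds A s B := List.forall_mem_cons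

theorem holds_nil {s : Var → ℕ} : Holds A s [] := List.forall_mem_nil _

theorem holds_append {s : Var → ℕ} {B B' : List Atom} :
    Holds A s (B ++ B') ↔ Holds A s B ∧ Holds A s B' := List.forall_mem_append

theorem holds_listSPath {s : Var → ℕ} {a b base n : ℕ} :
    Holds A s (listSPath a b base n) ↔ ∀ j < n,
      A pS [eval s (pathVar a b base n j), eval s (pathVar a b base n (j + 1))] := by
  simp [Holds, listSPath]

theorem holds_head_listRuleFloodGen {s : Var → ℕ} :
    Holds A s (listRuleFloodGen p).2 ↔ A pG [s (Sum.inl 0), s (Sum.inl 1)] ∧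
      ∀ i < p, A (pR i) [s (Sum.inl 0), s (Sum.inl 1)] ∧
        A (pT i) [s (Sum.inl 0), s (Sum.inl 1), s (Sum.inl 2)] := by
  simp only [Holds, listRuleFloodGen, List.forall_mem_cons, List.forall_mem_flatMap, List.mem_range,
    List.not_mem_nil, false_imp_iff, implies_true, and_true, List.map_cons, List.map_nil, eval_vt]

theorem holds_head_listRuleEx {s : Var → ℕ} :
    Holds A s (listRuleEx p).2 ↔ A pS0 [s (Sum.inl 0), s (Sum.inl 1)] ∧
      A (pR 0) [s (Sum.inl 0), s (Sum.inl 0)] ∧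
      ∀ i < p, A (pT i) [s (Sum.inl 0), s (Sum.inl 0), s (Sum.inl 0)] := by
  simp [Holds, listRuleEx]

theorem holds_body_listRuleT {s : Var → ℕ} {m n : ℕ} (hm : 0 < m) (hn : 0 < n) :
    Holds A s (listRuleT m n i).1 → ∃ f g : ℕ → ℕ,
      f m = s (Sum.inl 3) ∧ g n = s (Sum.inl 4) ∧
      A (pT i) [s (Sum.inl 0), f 0, g 0] ∧
      (∀ j < m, A pS [f j, f (j + 1)]) ∧ ∀ j < n, A pS [g j, g (j + 1)] := by
  intro h
  simp only [listRuleT, holds_cons, holds_append, holds_listSPath] at h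
  exact ⟨fun j => eval s (pathVar 1 3 10 m j), fun j => eval s (pathVar 2 4 (11 + m) n j),
    by simp [pathVar, hm.ne'], by simp [pathVar, hn.ne'],
    by simpa [pathVar] using h.1, h.2.1, h.2.2⟩

/-- The assignment listing the values of the variables `0, 1, 2, …`. -/
def assign (l : List ℕ) : Var → ℕ
  | Sum.inl n => l.getD n 0
  | Sum.inr _ => 0

/-- The assignment sending the variables of the rule (3) to `x` and to the elements of the `S`-paths
`f` and `g` of lengths `m` and `n`. -/
def assignPaths (x m n : ℕ) (f g : ℕ → ℕ) : Var → ℕ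
  | Sum.inl 0 => x
  | Sum.inl 1 => f 0
  | Sum.inl 2 => g 0
  | Sum.inl 3 => f m
  | Sum.inl 4 => g n
  | Sum.inl (v + 10) => if v ≤ m then f v else g (v - (m + 1))
  | _ => 0

theorem eval_assignPaths_fst {m n : ℕ} {f g : ℕ → ℕ} {j : ℕ} (hj : j ≤ m) :
    eval (assignPaths x m n f g) (pathVar 1 3 10 m j) = f j := by
  unfold pathVar
  split_ifs with h0 hm
  · rw [h0]; rfl
  · rw [hm]; rfl
  · simp [Nat.add_comm 10, assignPaths, hj]

theorem eval_assignPaths_snd {m n : ℕ} {f g : ℕ → ℕ} {j : ℕ} :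
    eval (assignPaths x m n f g) (pathVar 2 4 (11 + m) n j) = g j := by
  unfold pathVar
  split_ifs with h0 hn
  · rw [h0]; rfl
  · rw [hn]; rfl
  · have h11 : 11 + m + j = m + 1 + j + 10 := by omega
    have hlt : ¬ m + 1 + j ≤ m := by omega
    simp [h11, assignPaths, hlt]

theorem holds_assignPaths {m n : ℕ} {f g : ℕ → ℕ} :
    A (pT i) [x, f 0, g 0] → (∀ j < m, A pS [f j, f (j + 1)]) →
      (∀ j < n, A pS [g j, g (j + 1)]) → Holds A (assignPaths x m n f g) (listRuleT m n i).1 := by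
  intro hT hf hg
  refine holds_cons.2 ⟨hT, holds_append.2 ⟨holds_listSPath.2 fun j hj => ?_,
    holds_listSPath.2 fun j hj => ?_⟩⟩
  · rw [eval_assignPaths_fst hj.le, eval_assignPaths_fst hj]
    exact hf j hj
  · rw [eval_assignPaths_snd, eval_assignPaths_snd]
    exact hg j hj

theorem closed_ofNum (h : ClosedOn (ruleSystem p r q) K (fun _ => True) L A) :
    (Interp.ofNum A).Closed p r q K L := by
  obtain ⟨hS, hFlood, hEnd, hGInit, hGen, hi⟩ := forall_mem_datalog_ruleSystem.1 h.datalog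
  have hEx := fun l => h.skolem (assign l) fun _ => trivial
  replace hS := fun l => hS (assign l) fun _ => trivial
  replace hFlood := fun l => hFlood (assign l) fun _ => trivial
  replace hEnd := fun l => hEnd (assign l) fun _ => trivial
  replace hGInit := fun l => hGInit (assign l) fun _ => trivial
  replace hGen := fun l => hGen (assign l) fun _ => trivial
  have hR := fun i hi' l => (hi i hi').1 (assign l) fun _ => trivial
  have hGStep := fun i hi' l => (hi i hi').2.2 (assign l) fun _ => trivial
  simp only [ruleSystem, holds_head_listRuleFloodGen, holds_head_listRuleEx] at hGen hEx
  simp only [listRuleS, listRuleFloodProp, listRuleSEnd, listRuleGInit, listRuleR, listRuleGStep,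
    listRuleFloodGen, listRuleEx, holds_cons, holds_nil, and_true, List.map_cons, List.map_nil,
    eval_vt] at hS hFlood hEnd hGInit hGen hR hGStep hEx
  constructor
  case ruleS => exact fun {x y} => hS [x, y]
  case ruleR => exact fun {i x y z} hi hR' hS' => hR i hi [x, y, z] ⟨hR', hS'⟩
  case ruleT =>
    intro i x f g hip hT hf hg
    exact ((hi i hip).2.1 _ (fun _ => trivial) (holds_assignPaths hT hf hg)) _ List.mem_cons_self
  case ruleFloodProp => exact fun {x y} => hFlood [x, y]
  case ruleSEnd => exact fun {x} => hEnd [x]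
  case ruleGInit =>
    exact fun {x y z} h1 h2 => hGInit [x, z, 0, 0, 0, 0, 0, 0, 0, 0, 0, y] ⟨h1, h2⟩
  case ruleGStep => exact fun {i x y z} hi h1 h2 h3 => hGStep i hi [x, y, z] ⟨h1, h2, h3⟩
  case ruleFloodGen => exact fun {x y z} h1 h2 h3 => hGen [x, y, z] ⟨h1, h2, h3⟩
  case ruleEx => exact fun {y z} hL h1 h2 => hEx [y + K, y, z] hL rfl ⟨h1, h2⟩

theorem holds_head_toNum_listRuleFloodGen (h : X.Closed p r q K L) {s : Var → ℕ}
    (hb : Holds (X.toNum p) s (listRuleFloodGen p).1) :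
    Holds (X.toNum p) s (listRuleFloodGen p).2 := by
  simp only [listRuleFloodGen, holds_cons, holds_nil, List.map_cons, List.map_nil, eval_vt,
    toNum_pFlood, and_true] at hb
  obtain ⟨hG, hRT⟩ := h.ruleFloodGen hb.1 hb.2.1 hb.2.2
  exact holds_head_listRuleFloodGen.2 ⟨toNum_pG.2 hG, fun i hi =>
    ⟨(toNum_pR hi).2 (hRT i hi).1, (toNum_pT hi).2 (hRT i hi).2⟩⟩

theorem holds_head_toNum_listRuleT (hr : 0 < r i) (hq : 0 < q i) (h : X.Closed p r q K L)
    (hi : i < p) {s : Var → ℕ} (hb : Holds (X.toNum p) s (listRuleT (r i) (q i) i).1) :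
    Holds (X.toNum p) s (listRuleT (r i) (q i) i).2 := by
  obtain ⟨f, g, hfr, hgq, hT, hf, hg⟩ := holds_body_listRuleT hr hq hb
  simp only [toNum_pT hi, toNum_pS] at hT hf hg
  simpa [listRuleT, holds_cons, holds_nil, toNum_pT hi, hfr, hgq] using h.ruleT hi hT hf hg

theorem closedOn_toNum (hp : 0 < p) (hr : ∀ i, 0 < r i) (hq : ∀ i, 0 < q i)
    (h : X.Closed p r q K L) :
    ClosedOn (ruleSystem p r q) K (fun _ => True) L (X.toNum p) where
  datalog := by
    refine forall_mem_datalog_ruleSystem.2 ⟨fun s _ hb => ?_, fun s _ hb => ?_, fun s _ hb => ?_,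
      fun s _ hb => ?_, fun s _ hb => ?_,
      fun i hi => ⟨fun s _ hb => ?_, fun s _ hb => ?_, fun s _ hb => ?_⟩⟩
    case refine_7 => exact holds_head_toNum_listRuleT (hr i) (hq i) h hi hb
    case refine_5 => exact holds_head_toNum_listRuleFloodGen h hb
    all_goals
      simp only [listRuleS, listRuleFloodProp, listRuleSEnd, listRuleGInit, listRuleR,
        listRuleGStep, holds_cons, holds_nil, List.map_cons, List.map_nil, eval_vt, toNum_pEnd,
        toNum_pFlood, toNum_pS0, toNum_pS, toNum_pG, and_true] at hb ⊢
    case refine_1 => exact h.ruleS hb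
    case refine_2 => exact h.ruleFloodProp hb
    case refine_3 => exact h.ruleSEnd hb
    case refine_4 => exact h.ruleGInit hb.1 hb.2
    case refine_6 =>
      rw [toNum_pR hi] at hb
      exact (toNum_pR (Nat.mod_lt _ hp)).2 (h.ruleR hi hb.1 hb.2)
    case refine_8 =>
      rw [toNum_pR hi, toNum_pT hi] at hb
      exact h.ruleGStep hi hb.1 hb.2.1 hb.2.2
  skolem s _ hL hs hb := by
    simp only [ruleSystem, listRuleEx, holds_cons, holds_nil, List.map_cons, List.map_nil, eval_vt,
      toNum_pEnd, toNum_pG, and_true] at hb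
    obtain ⟨hS₀, hR, hT⟩ := h.ruleEx hL hb.1 hb.2
    rw [← hs] at hS₀ hR hT
    exact holds_head_listRuleEx.2
      ⟨toNum_pS0.2 hS₀, (toNum_pR hp).2 hR, fun i hi => (toNum_pT hi).2 (hT i hi)⟩

end Interp

/-! ### Locality of the chase -/

namespace Interp

/-- The pairs `(x, y)` that can start an atom `G(x, y)`, `R_i(x, y)` or `T_i(x, y, z)` of the chase
which is not produced by rule (8): either `y` is on the chain `x`, `x - K`, `x - 2K`, …, or `y` is
a term of the instance that is reached by leaving the chain through `S`. -/
def Reach (Y : Interp) (K x y : ℕ) : Prop :=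
  y < K ∧ (x < K ∨ Y.Flood y) ∨ y ≤ x ∧ x % K = y % K

/-- The atoms on elements outside `L` that may be added to `Y` when the restriction to create
witnesses for elements of `L` only is given up. -/
def localize (Y : Interp) (K : ℕ) (L : ℕ → Prop) : Interp where
  End x := x < K ∧ Y.End x
  Flood x := L x → Y.Flood x
  S₀ x y := (x < K ∧ y < K ∨ x = y + K) ∧ (L y → Y.S₀ x y)
  S x y := (x < K ∧ y < K ∨ x = y + K) ∧ (L y → Y.S x y)
  G x y := L x → Y.G x y ∧ Y.Reach K x y ∨ Y.Flood x ∧ (L y → Y.Flood y)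
  R i x y := L x → Y.R i x y ∧ Y.Reach K x y ∨ Y.Flood x ∧ (L y → Y.Flood y)
  T i x y z := L x → Y.T i x y z ∧ Y.Reach K x y ∧ Y.Reach K x z ∨
    Y.Flood x ∧ (L y → Y.Flood y) ∧ (L z → Y.Flood z)

section Locality

variable {p K : ℕ} {r q : ℕ → ℕ} {L : ℕ → Prop} {Y : Interp} {i x y z : ℕ}

theorem Reach.refl : Y.Reach K x x := .inr ⟨le_rfl, rfl⟩

theorem Reach.of_mem (hL : ∀ m n, m ≤ n → L n → L m) (hLK : ∀ n < K, L n) (h : Y.Reach K x y)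
    (hx : L x) : L y := by
  rcases h with ⟨hy, -⟩ | ⟨hyx, -⟩
  exacts [hLK y hy, hL y x hyx hx]

theorem localize_S_of_mem (hL : ∀ m n, m ≤ n → L n → L m) (hLK : ∀ n < K, L n)
    (h : (Y.localize K L).S x y) (hx : L x) : L y ∧ Y.S x y := by
  obtain ⟨⟨-, hy⟩ | rfl, hS⟩ := h
  · exact ⟨hLK y hy, hS (hLK y hy)⟩
  · have hy := hL y (y + K) (Nat.le_add_right y K) hx
    exact ⟨hy, hS hy⟩

theorem Reach.step (hY : Y.Closed p r q K L) (h : Y.Reach K x y) (hS : (Y.localize K L).S y z)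
    (hyz : Y.S y z) : Y.Reach K x z := by
  obtain ⟨⟨-, hz⟩ | rfl, -⟩ := hS
  · exact .inl ⟨hz, .inr (hY.ruleFloodProp hyz)⟩
  · rcases h with ⟨hy, -⟩ | ⟨hyx, hmod⟩
    · exact .inl ⟨by omega, .inr (hY.ruleFloodProp hyz)⟩
    · exact .inr ⟨by omega, by rw [hmod, Nat.add_mod_right]⟩

theorem Reach.path (hL : ∀ m n, m ≤ n → L n → L m) (hLK : ∀ n < K, L n)
    (hY : Y.Closed p r q K L) (hx : L x) {f : ℕ → ℕ} {m : ℕ} (h : Y.Reach K x (f 0))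
    (hf : ∀ j < m, (Y.localize K L).S (f j) (f (j + 1))) :
    Y.Reach K x (f m) ∧ ∀ j < m, Y.S (f j) (f (j + 1)) := by
  induction m with
  | zero => exact ⟨h, by simp⟩
  | succ m ih =>
    obtain ⟨hm, hS⟩ := ih fun j hj => hf j (hj.trans m.lt_succ_self)
    have hlast := (localize_S_of_mem hL hLK (hf m m.lt_succ_self) (hm.of_mem hL hLK hx)).2
    exact ⟨hm.step hY (hf m m.lt_succ_self) hlast, Nat.forall_lt_succ_right.2 ⟨hS, hlast⟩⟩

theorem flood_path (hY : Y.Closed p r q K L) {f : ℕ → ℕ} {m : ℕ} (h : L (f 0) → Y.Flood (f 0))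
    (hf : ∀ j < m, (Y.localize K L).S (f j) (f (j + 1))) : L (f m) → Y.Flood (f m) := by
  rcases m with - | m
  · exact h
  · exact fun hm => hY.ruleFloodProp ((hf m m.lt_succ_self).2 hm)

theorem G_of_localize (hY : Y.Closed p r q K L) (h : (Y.localize K L).G x y) (hx : L x)
    (hy : L y) : Y.G x y := by
  rcases h hx with ⟨hG, -⟩ | ⟨hFx, hFy⟩
  exacts [hG, (hY.ruleFloodGen hFx (hFy hy) hFx).1]

theorem R_of_localize (hY : Y.Closed p r q K L) (hi : i < p) (h : (Y.localize K L).R i x y)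
    (hx : L x) (hy : L y) : Y.R i x y := by
  rcases h hx with ⟨hR, -⟩ | ⟨hFx, hFy⟩
  exacts [hR, ((hY.ruleFloodGen hFx (hFy hy) hFx).2 i hi).1]

theorem T_of_localize (hY : Y.Closed p r q K L) (hi : i < p) (h : (Y.localize K L).T i x y z)
    (hx : L x) (hy : L y) (hz : L z) : Y.T i x y z := by
  rcases h hx with ⟨hT, -⟩ | ⟨hFx, hFy, hFz⟩
  exacts [hT, ((hY.ruleFloodGen hFx (hFy hy) (hFz hz)).2 i hi).2]

theorem closed_localize (hL : ∀ m n, m ≤ n → L n → L m) (hLK : ∀ n < K, L n)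
    (hY : Y.Closed p r q K L) : (Y.localize K L).Closed p r q K (fun _ => True) where
  ruleS h := ⟨h.1, fun hy => hY.ruleS (h.2 hy)⟩
  ruleR hi hR hS hx := by
    rcases hR hx with ⟨hR, hxy⟩ | ⟨hFx, -⟩
    · have hyz := (localize_S_of_mem hL hLK hS (hxy.of_mem hL hLK hx)).2
      exact .inl ⟨hY.ruleR hi hR hyz, hxy.step hY hS hyz⟩
    · exact .inr ⟨hFx, fun hz => hY.ruleFloodProp (hS.2 hz)⟩
  ruleT hi hT hf hg hx := by
    rcases hT hx with ⟨hT, hxf, hxg⟩ | ⟨hFx, hFf, hFg⟩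
    · obtain ⟨hxf', hf'⟩ := hxf.path hL hLK hY hx hf
      obtain ⟨hxg', hg'⟩ := hxg.path hL hLK hY hx hg
      exact .inl ⟨hY.ruleT hi hT hf' hg', hxf', hxg'⟩
    · exact .inr ⟨hFx, flood_path hY hFf hf, flood_path hY hFg hg⟩
  ruleFloodProp h hy := hY.ruleFloodProp (h.2 hy)
  ruleSEnd h := ⟨.inl ⟨h.1, h.1⟩, fun _ => hY.ruleSEnd h.2⟩
  ruleGInit hxy hyz hx := by
    obtain ⟨hy, hxy'⟩ := localize_S_of_mem hL hLK hxy hx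
    have hyz' := (localize_S_of_mem hL hLK hyz hy).2
    exact .inl ⟨hY.ruleGInit hxy' hyz', (Reach.refl.step hY hxy hxy').step hY hyz hyz'⟩
  ruleGStep hi hG hR hT hx := by
    rcases hT hx with ⟨hT, hxy, hxz⟩ | ⟨hFx, -, hFz⟩
    · have hy := hxy.of_mem hL hLK hx
      exact .inl ⟨hY.ruleGStep hi (G_of_localize hY hG hx hy) (R_of_localize hY hi hR hx hy) hT,
        hxz⟩
    · exact .inr ⟨hFx, hFz⟩
  ruleFloodGen hx hy hz :=
    ⟨fun hLx => .inr ⟨hx hLx, hy⟩, fun _ _ =>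
      ⟨fun hLx => .inr ⟨hx hLx, hy⟩, fun hLx => .inr ⟨hx hLx, hy, hz⟩⟩⟩
  ruleEx {y z} _ hG hEnd := by
    have hex (hy : L y) := hY.ruleEx hy (G_of_localize hY hG hy (hLK z hEnd.1)) hEnd.2
    have hexK (hy : L (y + K)) := hex (hL y (y + K) (Nat.le_add_right y K) hy)
    exact ⟨⟨.inr rfl, fun hy => (hex hy).1⟩, fun hy => .inl ⟨(hexK hy).2.1, .refl⟩,
      fun i hi hy => .inl ⟨(hexK hy).2.2 i hi, .refl, .refl⟩⟩

theorem toNum_of_localize (hY : Y.Closed p r q K L) {P : ℕ} {l : List ℕ}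
    (h : (Y.localize K L).toNum p P l) (hl : ∀ n ∈ l, L n) : Y.toNum p P l := by
  match l with
  | [] | _ :: _ :: _ :: _ :: _ => exact h
  | [x] =>
    simp only [List.forall_mem_singleton] at hl
    exact h.imp (.imp_right fun hEnd => hEnd.2) (.imp_right fun hFlood => hFlood hl)
  | [x, y] =>
    simp only [List.mem_cons, List.not_mem_nil, or_false, forall_eq_or_imp, forall_eq] at hl
    rcases h with ⟨hP, h⟩ | ⟨hP, h⟩ | ⟨hP, h⟩ | ⟨i, hi, hP, h⟩
    · exact .inl ⟨hP, h.2 hl.2⟩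
    · exact .inr (.inl ⟨hP, h.2 hl.2⟩)
    · exact .inr (.inr (.inl ⟨hP, G_of_localize hY h hl.1 hl.2⟩))
    · exact .inr (.inr (.inr ⟨i, hi, hP, R_of_localize hY hi h hl.1 hl.2⟩))
  | [x, y, z] =>
    simp only [List.mem_cons, List.not_mem_nil, or_false, forall_eq_or_imp, forall_eq] at hl
    obtain ⟨i, hi, hP, h⟩ := h
    exact ⟨i, hi, hP, T_of_localize hY hi h hl.1 hl.2.1 hl.2.2⟩

end Locality

end Interp

theorem toNum_ofNum_imp {p : ℕ} {A : NumInterp} {P : ℕ} {l : List ℕ}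
    (h : (Interp.ofNum A).toNum p P l) : A P l := by
  match l with
  | [x] => rcases h with ⟨rfl, h⟩ | ⟨rfl, h⟩ <;> exact h
  | [x, y] => rcases h with ⟨rfl, h⟩ | ⟨rfl, h⟩ | ⟨rfl, h⟩ | ⟨i, -, rfl, h⟩ <;> exact h
  | [x, y, z] => obtain ⟨i, -, rfl, h⟩ := h; exact h

section Instance

variable {M : TCM} {I : Finset Atom} {K : ℕ} {r q : ℕ → ℕ} {L : ℕ → Prop} {A : NumInterp} {a : Atom}

theorem toNum_localize_fact (ha : InSig M a) (hK : ∀ t ∈ a.2, code t < K)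
    (hA : A a.1 (a.2.map code)) :
    ((Interp.ofNum A).localize K L).toNum M.p a.1 (a.2.map code) := by
  obtain ⟨P, l⟩ := a
  have reach {x y : ℕ} (hx : x < K) (hy : y < K) : (Interp.ofNum A).Reach K x y :=
    .inl ⟨hy, .inl hx⟩
  rcases ha with ⟨hP, hl⟩ | ⟨hP, hl⟩ | ⟨hP, hl⟩
  · obtain ⟨x, rfl⟩ := List.length_eq_one_iff.1 hl
    simp only [List.forall_mem_singleton] at hK
    rcases hP with rfl | rfl
    exacts [.inl ⟨rfl, hK, hA⟩, .inr ⟨rfl, fun _ => hA⟩]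
  · obtain ⟨x, y, rfl⟩ := List.length_eq_two.1 hl
    simp only [List.mem_cons, List.not_mem_nil, or_false, forall_eq_or_imp, forall_eq] at hK
    rcases hP with rfl | rfl | rfl | ⟨i, hi, rfl⟩
    · exact .inl ⟨rfl, .inl hK, fun _ => hA⟩
    · exact .inr (.inl ⟨rfl, .inl hK, fun _ => hA⟩)
    · exact .inr (.inr (.inl ⟨rfl, fun _ => .inl ⟨hA, reach hK.1 hK.2⟩⟩))
    · exact .inr (.inr (.inr ⟨i, hi, rfl, fun _ => .inl ⟨hA, reach hK.1 hK.2⟩⟩))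
  · obtain ⟨x, y, z, rfl⟩ := List.length_eq_three.1 hl
    simp only [List.mem_cons, List.not_mem_nil, or_false, forall_eq_or_imp, forall_eq] at hK
    obtain ⟨i, hi, rfl⟩ := hP
    exact ⟨i, hi, rfl, fun _ => .inl ⟨hA, reach hK.1 hK.2.1, reach hK.1 hK.2.2⟩⟩

theorem FullChase.localize (hr : ∀ i, 0 < r i) (hq : ∀ i, 0 < q i) (hsig : ∀ a ∈ I, InSig M a)
    (hI : ∀ a ∈ I, ∀ t ∈ a.2, code t < K) (hL : ∀ m n, m ≤ n → L n → L m) (hLK : ∀ n < K, L n)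
    {P : ℕ} {l : List ℕ} (h : FullChase (ruleSystem M.p r q) I K P l) :
    ((Interp.ofNum (Chase (ruleSystem M.p r q) I K L)).localize K L).toNum M.p P l := by
  have hclosed := Interp.closed_localize hL hLK (closed_ofNum (Chase.closedOn
    (Γ := ruleSystem M.p r q) (I := I) (K := K) (D := fun _ => True) (L := L)))
  exact Chase.of_closedOn (wellFormed_ruleSystem hr hq)
    (closedOn_toNum (p_pos M) hr hq hclosed) trivial (fun _ _ _ _ => trivial)
    (fun _ _ _ => trivial)
    (fun a ha => toNum_localize_fact (hsig a ha) (hI a ha) (.fact ha)) h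

/-- Creating witnesses only for the elements of a downward closed set `L` loses no atoms on `L`. -/
theorem FullChase.chase_of_forall_mem (hr : ∀ i, 0 < r i) (hq : ∀ i, 0 < q i)
    (hsig : ∀ a ∈ I, InSig M a) (hI : ∀ a ∈ I, ∀ t ∈ a.2, code t < K)
    (hL : ∀ m n, m ≤ n → L n → L m) (hLK : ∀ n < K, L n) {P : ℕ} {l : List ℕ}
    (h : FullChase (ruleSystem M.p r q) I K P l) (hl : ∀ n ∈ l, L n) :
    Chase (ruleSystem M.p r q) I K L P l :=
  toNum_ofNum_imp (Interp.toNum_of_localize (closed_ofNum Chase.closedOn)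
    (FullChase.localize hr hq hsig hI hL hLK h) hl)

end Instance

/-! ### Compression of chains -/

/-- Shortens the chains of chase elements: the element `c + i * K` of a chain that satisfies `Flood`
up to height `k` is moved down so that only the elements of `O` below it count for its height. -/
def compress (Y : Interp) (K k : ℕ) (O : Finset ℕ) (n : ℕ) : ℕ :=
  if Y.Flood (n % K + k * K) then
    n % K + {i ∈ Finset.Icc 1 (n / K) | n % K + i * K ∈ O}.card * K
  else n

section Compress

variable {p K k : ℕ} {r q : ℕ → ℕ} {Y : Interp} {O : Finset ℕ} {n x y : ℕ}

theorem compress_of_lt (hn : n < K) : compress Y K k O n = n := by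
  simp [compress, Nat.mod_eq_of_lt hn, Nat.div_eq_of_lt hn]

theorem compress_of_not_flood (h : ¬ Y.Flood (n % K + k * K)) : compress Y K k O n = n := if_neg h

theorem card_filter_chain_le (hK : 0 < K) (hO : O.card ≤ k) (c m : ℕ) :
    {i ∈ Finset.Icc 1 m | c + i * K ∈ O}.card ≤ k := by
  refine (Finset.card_le_card_of_injOn (fun i => c + i * K) (fun i hi => ?_) ?_).trans hO
  · exact (Finset.mem_filter.1 hi).2
  · exact fun i _ j _ hij => Nat.eq_of_mul_eq_mul_right hK (Nat.add_left_cancel hij)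

theorem compress_add (hK : 0 < K) (hy : y + K ∈ O) :
    compress Y K k O (y + K) = compress Y K k O y + K := by
  unfold compress
  rw [Nat.add_mod_right, Nat.add_div_right _ hK]
  split_ifs with h
  · have htop : y % K + (y / K + 1) * K ∈ O := by
      convert hy using 1
      rw [add_one_mul, ← add_assoc, Nat.mod_add_div']
    rw [← Finset.insert_Icc_right_eq_Icc_add_one (Nat.le_add_left 1 _), Finset.filter_insert,
      if_pos htop, Finset.card_insert_of_notMem (by simp), add_one_mul, add_assoc]
  · rfl

section Flood

variable (hY : Y.Closed p r q K fun _ => True)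
  (hflood : ∀ n, K ≤ n → Y.Flood n → Y.S₀ n (n - K))
include hY hflood

theorem flood_antitone_on_chain {c i j : ℕ} (hij : i ≤ j) (h : Y.Flood (c + j * K)) :
    Y.Flood (c + i * K) := by
  induction hij with
  | refl => exact h
  | @step j _ ih =>
    have hS₀ := hflood _ ((Nat.le_mul_of_pos_left K j.succ_pos).trans (Nat.le_add_left _ _)) h
    have hsub : c + (j + 1) * K - K = c + j * K := by rw [add_one_mul]; omega
    exact ih (hsub ▸ hY.ruleFloodProp (hY.ruleS hS₀))

theorem compress_lt (hK : 0 < K) (hO : O.card ≤ k) (hn : K ≤ n → Y.S₀ n (n - K)) :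
    compress Y K k O n < K * (k + 1) := by
  by_cases h : Y.Flood (n % K + k * K)
  · rw [compress, if_pos h]
    have hcard := Nat.mul_le_mul_right K (card_filter_chain_le hK hO (n % K) (n / K))
    have hmod := Nat.mod_lt n hK
    rw [mul_comm K, add_one_mul]
    omega
  · rw [compress_of_not_flood h]
    by_contra! hlarge
    have hheight : k + 1 ≤ n / K := by rwa [Nat.le_div_iff_mul_le hK, mul_comm]
    have hKn : K ≤ n := (Nat.le_mul_of_pos_right K k.succ_pos).trans hlarge
    have hpred : n - K = n % K + (n / K - 1) * K := by
      have := Nat.mod_add_div' n K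
      have := Nat.le_mul_of_pos_left K (k.succ_pos.trans_le hheight)
      rw [Nat.sub_one_mul]
      omega
    exact h (flood_antitone_on_chain hY hflood (Nat.le_sub_one_of_lt hheight)
      (hpred ▸ hY.ruleFloodProp (hY.ruleS (hn hKn))))

theorem flood_compress_of_flood_top (hK : 0 < K) (hO : O.card ≤ k)
    (h : Y.Flood (n % K + k * K)) : Y.Flood (compress Y K k O n) := by
  rw [compress, if_pos h]
  exact flood_antitone_on_chain hY hflood (card_filter_chain_le hK hO _ _) h

theorem flood_compress (hK : 0 < K) (hO : O.card ≤ k) (h : Y.Flood n) :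
    Y.Flood (compress Y K k O n) := by
  by_cases htop : Y.Flood (n % K + k * K)
  · exact flood_compress_of_flood_top hY hflood hK hO htop
  · rwa [compress_of_not_flood htop]

theorem compress_of_reach (hK : 0 < K) (hO : O.card ≤ k) (x : ℕ) :
    (∀ y, Y.Reach K x y → compress Y K k O y = y) ∨
      ∀ y, Y.Reach K x y → Y.Flood (compress Y K k O y) := by
  rcases lt_or_ge x K with hx | hx
  · left
    rintro y (⟨hy, -⟩ | ⟨hyx, -⟩)
    exacts [compress_of_lt hy, compress_of_lt (hyx.trans_lt hx)]
  · by_cases h : Y.Flood (x % K + k * K)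
    · right
      rintro y (⟨-, hx' | hy⟩ | ⟨-, hmod⟩)
      · omega
      · exact flood_compress hY hflood hK hO hy
      · exact flood_compress_of_flood_top hY hflood hK hO (hmod ▸ h)
    · left
      rintro y (⟨hy, -⟩ | ⟨-, hmod⟩)
      exacts [compress_of_lt hy, compress_of_not_flood (hmod ▸ h)]

theorem S₀_compress (hK : 0 < K) (hO : O.card ≤ k) (hy : y + K ∈ O) (h : Y.S₀ (y + K) y) :
    Y.S₀ (compress Y K k O (y + K)) (compress Y K k O y) := by
  by_cases htop : Y.Flood (y % K + k * K)
  · have hF : Y.Flood (compress Y K k O (y + K)) :=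
      flood_compress_of_flood_top hY hflood hK hO (by rwa [Nat.add_mod_right])
    rw [compress_add hK hy] at hF ⊢
    simpa using hflood _ (Nat.le_add_left _ _) hF
  · rwa [compress_of_not_flood htop, compress_of_not_flood (by rwa [Nat.add_mod_right])]

theorem compress_of_localize (hK : 0 < K) (hO : O.card ≤ k) {φ : Prop} {x y z : ℕ}
    (h : φ ∧ Y.Reach K x y ∧ Y.Reach K x z ∨ Y.Flood x ∧ Y.Flood y ∧ Y.Flood z) :
    (φ ∧ compress Y K k O x = x ∧ compress Y K k O y = y ∧ compress Y K k O z = z) ∨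
      Y.Flood (compress Y K k O x) ∧ Y.Flood (compress Y K k O y) ∧
        Y.Flood (compress Y K k O z) := by
  rcases h with ⟨hφ, hxy, hxz⟩ | ⟨hx, hy, hz⟩
  · exact (compress_of_reach hY hflood hK hO x).imp (fun h => ⟨hφ, h x .refl, h y hxy, h z hxz⟩)
      fun h => ⟨h x .refl, h y hxy, h z hxz⟩
  · exact .inr ⟨flood_compress hY hflood hK hO hx, flood_compress hY hflood hK hO hy,
      flood_compress hY hflood hK hO hz⟩

theorem rel_compress_of_chain (hK : 0 < K) (hO : O.card ≤ k)
    (hS₀ : ∀ n ∈ O, K ≤ n → Y.S₀ n (n - K)) {x y : ℕ} {φ : ℕ → ℕ → Prop}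
    (hφ : ∀ {x y}, Y.S₀ x y → φ x y) (hx : x < K ∨ x ∈ O)
    (hxy : x < K ∧ y < K ∨ x = y + K) (h : φ x y) :
    φ (compress Y K k O x) (compress Y K k O y) := by
  rcases hxy with ⟨hx, hy⟩ | rfl
  · rwa [compress_of_lt hx, compress_of_lt hy]
  · have hO' : y + K ∈ O := hx.resolve_left (by omega)
    exact hφ (S₀_compress hY hflood hK hO hO' (by simpa using hS₀ _ hO' (Nat.le_add_left K y)))

/-- Compression is a homomorphism on the atoms of the chase whose elements are in the instance or
in `O`. -/
theorem toNum_compress (hK : 0 < K) (hO : O.card ≤ k) (hS₀ : ∀ n ∈ O, K ≤ n → Y.S₀ n (n - K))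
    {P : ℕ} {l : List ℕ} (h : (Y.localize K fun _ => True).toNum p P l)
    (hl : ∀ n ∈ l, n < K ∨ n ∈ O) : Y.toNum p P (l.map (compress Y K k O)) := by
  match l with
  | [] | _ :: _ :: _ :: _ :: _ => exact h
  | [x] =>
    rcases h with ⟨hP, hx, h⟩ | ⟨hP, h⟩
    · exact .inl ⟨hP, (compress_of_lt hx).symm ▸ h⟩
    · exact .inr ⟨hP, flood_compress hY hflood hK hO (h trivial)⟩
  | [x, y] =>
    have hx : x < K ∨ x ∈ O := hl x List.mem_cons_self
    rcases h with ⟨hP, hxy, h⟩ | ⟨hP, hxy, h⟩ | ⟨hP, h⟩ | ⟨i, hi, hP, h⟩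
    · exact .inl ⟨hP, rel_compress_of_chain hY hflood hK hO hS₀ id hx hxy (h trivial)⟩
    · exact .inr (.inl ⟨hP,
        rel_compress_of_chain hY hflood hK hO hS₀ hY.ruleS hx hxy (h trivial)⟩)
    · refine .inr (.inr (.inl ⟨hP, ?_⟩))
      rcases compress_of_localize hY hflood hK hO
        ((h trivial).imp (fun h => ⟨h.1, h.2, .refl⟩) fun h => ⟨h.1, h.2 trivial, h.1⟩) with
        ⟨h, hx, hy, -⟩ | ⟨hx, hy, -⟩
      exacts [by rwa [hx, hy], (hY.ruleFloodGen hx hy hx).1]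
    · refine .inr (.inr (.inr ⟨i, hi, hP, ?_⟩))
      rcases compress_of_localize hY hflood hK hO
        ((h trivial).imp (fun h => ⟨h.1, h.2, .refl⟩) fun h => ⟨h.1, h.2 trivial, h.1⟩) with
        ⟨h, hx, hy, -⟩ | ⟨hx, hy, -⟩
      exacts [by rwa [hx, hy], ((hY.ruleFloodGen hx hy hx).2 i hi).1]
  | [x, y, z] =>
    obtain ⟨i, hi, hP, h⟩ := h
    refine ⟨i, hi, hP, ?_⟩
    rcases compress_of_localize hY hflood hK hO
      ((h trivial).imp id fun h => ⟨h.1, h.2.1 trivial, h.2.2 trivial⟩) with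
      ⟨h, hx, hy, hz⟩ | ⟨hx, hy, hz⟩
    exacts [by rwa [hx, hy, hz], ((hY.ruleFloodGen hx hy hz).2 i hi).2]

end Flood

theorem map_eval_compress {s : Var → ℕ} {l : List FTerm} (hl : ∀ t ∈ l, code t < K) :
    l.map (eval fun v => compress Y K k O (s v)) = (l.map (eval s)).map (compress Y K k O) := by
  rw [List.map_map]
  refine List.map_congr_left fun t ht => ?_
  rcases t with c | v
  · exact (compress_of_lt (hl _ ht)).symm
  · rfl

end Compress

section BoundedMatch

variable {M : TCM} {I q : Finset Atom} {K k : ℕ} {ri qi : ℕ → ℕ}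

theorem fullChase_pS0_of_mem (hr : ∀ i, 0 < ri i) (hq : ∀ i, 0 < qi i)
    (hI : ∀ a ∈ I, ∀ t ∈ a.2, code t < K) {P : ℕ} {l : List ℕ}
    (h : FullChase (ruleSystem M.p ri qi) I K P l) {n : ℕ} (hn : n ∈ l) (hKn : K ≤ n) :
    FullChase (ruleSystem M.p ri qi) I K pS0 [n, n - K] := by
  refine h.forall_mem (p := fun n => K ≤ n → FullChase (ruleSystem M.p ri qi) I K pS0 [n, n - K])
    (wellFormed_ruleSystem hr hq) (fun a ha t ht hle => absurd hle (hI a ha t ht).not_ge)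
    (fun s _ hs hb _ _ => ?_) n hn hKn
  have h1 : s (Sum.inl 0) - K = s (Sum.inl 1) := by omega
  rw [h1]
  exact (holds_head_listRuleEx.1 fun a ha => Chase.skolem trivial hs hb ha).1

/-- A query with at most `k` variables that matches into the chase matches into the part of the
chase with `k + 1` elements on each chain. -/
theorem exists_match_fullChase_iff (hr : ∀ i, 0 < ri i) (hq : ∀ i, 0 < qi i) (hK : 0 < K)
    (hsig : ∀ a ∈ I, InSig M a) (hI : ∀ a ∈ I, ∀ t ∈ a.2, code t < K)
    (hqK : ∀ a ∈ q, ∀ t ∈ a.2, code t < K) (hk : (varsF q).card ≤ k) :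
    (∃ s : Var → ℕ, ∀ a ∈ q, FullChase (ruleSystem M.p ri qi) I K a.1 (a.2.map (eval s))) ↔
      ∃ s : Var → ℕ, (∀ v, s v < K * (k + 1)) ∧ ∀ a ∈ q,
        Chase (ruleSystem M.p ri qi) I K (· < K * (k + 1)) a.1 (a.2.map (eval s)) := by
  constructor
  · rintro ⟨s, hs⟩
    let Y := Interp.ofNum (FullChase (ruleSystem M.p ri qi) I K)
    let O := (varsF q).image s
    have hY : Y.Closed M.p ri qi K fun _ => True := closed_ofNum Chase.closedOn
    have hflood (n) (hn : K ≤ n) (h : Y.Flood n) : Y.S₀ n (n - K) :=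
      fullChase_pS0_of_mem hr hq hI h List.mem_cons_self hn
    have hO : O.card ≤ k := Finset.card_image_le.trans hk
    have hchain {a} (ha : a ∈ q) {n} (hn : n ∈ a.2.map (eval s)) : K ≤ n → Y.S₀ n (n - K) :=
      fullChase_pS0_of_mem hr hq hI (hs a ha) hn
    have hvar (v) (hv : v ∈ varsF q) : K ≤ s v → Y.S₀ (s v) (s v - K) := by
      obtain ⟨a, ha, hva⟩ := mem_varsF.1 hv
      exact hchain ha (List.mem_map_of_mem (f := eval s) hva)
    let s' : Var → ℕ := fun v => if v ∈ varsF q then compress Y K k O (s v) else 0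
    refine ⟨s', fun v => ?_, fun a ha => ?_⟩
    · by_cases hv : v ∈ varsF q
      · simpa only [s', if_pos hv] using compress_lt hY hflood hK hO (hvar v hv)
      · simpa only [s', if_neg hv] using Nat.mul_pos hK k.succ_pos
    · have hs' : a.2.map (eval s') = (a.2.map (eval s)).map (compress Y K k O) := by
        rw [← map_eval_compress (hqK a ha)]
        exact map_eval_congr fun v hv => if_pos (mem_varsF.2 ⟨a, ha, hv⟩)
      have hmem : ∀ n ∈ a.2.map (eval s), n < K ∨ n ∈ O := by
        refine List.forall_mem_map.2 fun t ht => ?_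
        rcases t with c | v
        · exact .inl (hqK a ha _ ht)
        · exact .inr (Finset.mem_image_of_mem s (mem_varsF.2 ⟨a, ha, ht⟩))
      rw [hs']
      refine FullChase.chase_of_forall_mem hr hq hsig hI (fun m n => lt_of_le_of_lt)
        (fun n hn => hn.trans_le (Nat.le_mul_of_pos_right K k.succ_pos))
        (toNum_ofNum_imp (toNum_compress hY hflood hK hO
          (Finset.forall_mem_image.2 hvar)
          (FullChase.localize hr hq hsig hI (fun _ _ _ => id) (fun _ _ => trivial) (hs a ha)) hmem))
        (List.forall_mem_map.2 fun n hn => compress_lt hY hflood hK hO (hchain ha hn))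
  · rintro ⟨s, -, hs⟩
    exact ⟨s, fun a ha => (hs a ha).mono fun _ _ => trivial⟩

end BoundedMatch

/-! ### Entailment as a finite check -/

/-- The digit of `n` at position `i` in base `B`, counted from the least significant one. -/
def digit (B n i : ℕ) : ℕ := n / B ^ i % B

theorem digit_lt {B : ℕ} (hB : 0 < B) (n i : ℕ) : digit B n i < B := Nat.mod_lt _ hB

theorem exists_digit_eq {B : ℕ} (V : ℕ) {f : ℕ → ℕ} (hf : ∀ i, f i < B) :
    ∃ n < B ^ V, ∀ i < V, digit B n i = f i := by
  let n := finFunctionFinEquiv fun i : Fin V => (⟨f i, hf i⟩ : Fin B)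
  refine ⟨n, n.isLt, fun i hi => ?_⟩
  have : finFunctionFinEquiv.symm n ⟨i, hi⟩ = ⟨f i, hf i⟩ :=
    congrFun (Equiv.symm_apply_apply _ _) _
  exact congrArg Fin.val this

theorem digit_eq_zero_of_lt {B n i V : ℕ} (hn : n < B ^ V) (hV : V ≤ i) (hB : 0 < B) :
    digit B n i = 0 := by
  rw [digit, Nat.div_eq_of_lt (hn.trans_le (Nat.pow_le_pow_right hB hV)), Nat.zero_mod]

/-- The assignment whose values are the base `B` digits of `n`. -/
def digitAssignment (B n : ℕ) (v : Var) : ℕ := digit B n (Encodable.encode v)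

/-- The interpretation whose atoms are given by the binary digits of `a`. -/
def bitInterp (a : ℕ) : NumInterp := fun P l => digit 2 a (Encodable.encode (P, l)) = 1

theorem exists_digitAssignment_eq {B : ℕ} (V : ℕ) {s : Var → ℕ} (hs : ∀ v, s v < B) :
    ∃ n < B ^ V, ∀ v, Encodable.encode v < V → digitAssignment B n v = s v := by
  obtain ⟨n, hn, h⟩ := exists_digit_eq V (f := fun i => s (Denumerable.ofNat Var i)) fun _ => hs _
  exact ⟨n, hn, fun v hv => (h _ hv).trans (by rw [Denumerable.ofNat_encode])⟩

theorem exists_bitInterp_eq {A : NumInterp} {W : ℕ}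
    (hA : ∀ P l, A P l → Encodable.encode (P, l) < W) : ∃ a < 2 ^ W, bitInterp a = A := by
  let f : ℕ → ℕ := fun i =>
    if A (Denumerable.ofNat (ℕ × List ℕ) i).1 (Denumerable.ofNat (ℕ × List ℕ) i).2 then 1 else 0
  obtain ⟨a, ha, h⟩ := exists_digit_eq (B := 2) W (f := f) fun i => by
    dsimp only [f]
    split_ifs <;> omega
  refine ⟨a, ha, funext₂ fun P l => propext ?_⟩
  by_cases hlt : Encodable.encode (P, l) < W
  · simp only [bitInterp, h _ hlt, f, Denumerable.ofNat_encode, ite_eq_left_iff, zero_ne_one,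
      imp_false, not_not]
  · rw [bitInterp, digit_eq_zero_of_lt ha (not_lt.1 hlt) two_pos]
    exact iff_of_false zero_ne_one fun h => hlt (hA P l h)

theorem encode_le_of_mem {α : Type*} [Encodable α] {l : List α} {a : α} (h : a ∈ l) :
    Encodable.encode a ≤ Encodable.encode l := by
  induction l with
  | nil => exact absurd h List.not_mem_nil
  | cons b l ih =>
    rw [Encodable.encode_list_cons]
    rcases List.mem_cons.1 h with rfl | h
    · exact (Nat.left_le_pair _ _).trans (Nat.le_succ _)
    · exact (ih h).trans ((Nat.right_le_pair _ _).trans (Nat.le_succ _))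

theorem code_le_encode {L : List Atom} {t : FTerm} (h : Occurs t L) :
    code t ≤ Encodable.encode L :=
  let ⟨_, ha, ht⟩ := h
  (encode_le_of_mem ht).trans ((Nat.right_le_pair _ _).trans (encode_le_of_mem ha))

theorem encode_le_code (v : Var) : Encodable.encode v ≤ code (Sum.inr v) :=
  show _ ≤ 2 * Encodable.encode v + 1 by omega

theorem encode_lt_of_occurs {L : List Atom} {v : Var} {V : ℕ} (h : Occurs (Sum.inr v) L)
    (hV : Encodable.encode L < V) : Encodable.encode v < V :=
  ((encode_le_code v).trans (code_le_encode h)).trans_lt hV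

theorem holds_digitAssignment_iff {A : NumInterp} {s : Var → ℕ} {L : List Atom} {B n V : ℕ}
    (hn : ∀ v, Encodable.encode v < V → digitAssignment B n v = s v)
    (hV : Encodable.encode L < V) : Holds A (digitAssignment B n) L ↔ Holds A s L :=
  holds_congr fun v hv => hn v (encode_lt_of_occurs hv hV)

/-- The finitely many assignments with values below `B` to the variables of `ρ` respect `ρ`. -/
def RespectsRule (B a : ℕ) (ρ : ListRule) : Prop :=
  ∀ n < B ^ (Encodable.encode ρ + 1), Holds (bitInterp a) (digitAssignment B n) ρ.1 →
    Holds (bitInterp a) (digitAssignment B n) ρ.2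

/-- The analogue of `RespectsRule` for a Skolemized existential rule. The exponent leaves room for
the digits at positions `0` and `2`, which are the values of variables `0` and `1`. -/
def RespectsExRule (K b B a : ℕ) (ρ : ListRule) : Prop :=
  ∀ n < B ^ (Encodable.encode ρ + 3), digitAssignment B n (Sum.inl 1) < b →
    digitAssignment B n (Sum.inl 0) = digitAssignment B n (Sum.inl 1) + K →
    Holds (bitInterp a) (digitAssignment B n) ρ.1 → Holds (bitInterp a) (digitAssignment B n) ρ.2

/-- Every interpretation `a < 2 ^ W` that contains the facts `I` and is closed under the rules, with
witnesses created below `b` only, matches `q` by an assignment with values below `b + K`. -/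
def FiniteCheck (Γ : RuleSystem) (K b W : ℕ) (I q : List Atom) : Prop :=
  ∀ a < 2 ^ W, (∀ x ∈ I, bitInterp a x.1 (x.2.map code)) →
    (∀ ρ ∈ Γ.datalog, RespectsRule (b + K) a ρ) → RespectsExRule K b (b + K) a Γ.exRule →
    ∃ n < (b + K) ^ (Encodable.encode q + 1), Holds (bitInterp a) (digitAssignment (b + K) n) q

section FiniteCheck

variable {Γ : RuleSystem} {K b B a W : ℕ} {I q : List Atom}

theorem respectsRule_iff (hB : 0 < B) {ρ : ListRule} :
    RespectsRule B a ρ ↔ ∀ s : Var → ℕ, (∀ v, s v < B) →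
      Holds (bitInterp a) s ρ.1 → Holds (bitInterp a) s ρ.2 := by
  refine ⟨fun h s hs hb => ?_, fun h n _ => h _ fun v => digit_lt hB n _⟩
  obtain ⟨n, hn, hv⟩ := exists_digitAssignment_eq (Encodable.encode ρ + 1) hs
  exact (holds_digitAssignment_iff hv (Nat.lt_succ_of_le (Nat.right_le_pair _ _))).1 <| h n hn <|
    (holds_digitAssignment_iff hv (Nat.lt_succ_of_le (Nat.left_le_pair _ _))).2 hb

theorem respectsExRule_iff (hB : 0 < B) {ρ : ListRule} :
    RespectsExRule K b B a ρ ↔ ∀ s : Var → ℕ, (∀ v, s v < B) → s (Sum.inl 1) < b →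
      s (Sum.inl 0) = s (Sum.inl 1) + K →
      Holds (bitInterp a) s ρ.1 → Holds (bitInterp a) s ρ.2 := by
  refine ⟨fun h s hs hs1 hs0 hb => ?_, fun h n _ => h _ fun v => digit_lt hB n _⟩
  obtain ⟨n, hn, hv⟩ := exists_digitAssignment_eq (Encodable.encode ρ + 3) hs
  have h0 := hv (Sum.inl 0) (show 0 < _ by omega)
  have h1 := hv (Sum.inl 1) (show 2 < _ by omega)
  have hbody : Encodable.encode ρ.1 ≤ Encodable.encode ρ := Nat.left_le_pair _ _
  have hhead : Encodable.encode ρ.2 ≤ Encodable.encode ρ := Nat.right_le_pair _ _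
  exact (holds_digitAssignment_iff hv (by omega)).1 <|
    h n hn (by rwa [h1]) (by rwa [h0, h1]) <| (holds_digitAssignment_iff hv (by omega)).2 hb

theorem closedOn_bitInterp_iff (hB : 0 < B) :
    ClosedOn Γ K (· < B) (· < b) (bitInterp a) ↔
      (∀ ρ ∈ Γ.datalog, RespectsRule B a ρ) ∧ RespectsExRule K b B a Γ.exRule := by
  simp only [respectsRule_iff hB, respectsExRule_iff hB]
  exact ⟨fun h => ⟨h.datalog, h.skolem⟩, fun h => ⟨h.1, h.2⟩⟩

/-- The chase is the least of the interpretations over which `FiniteCheck` ranges. -/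
theorem finiteCheck_iff (hΓ : Γ.WellFormed) (hK : 0 < K)
    (hI : ∀ a ∈ I, ∀ t ∈ a.2, code t < K)
    (hW : ∀ P l, Chase Γ I.toFinset K (· < b) P l → Encodable.encode (P, l) < W) :
    FiniteCheck Γ K b W I q ↔
      ∃ s : Var → ℕ, (∀ v, s v < b + K) ∧ Holds (Chase Γ I.toFinset K (· < b)) s q := by
  have hB : 0 < b + K := Nat.add_pos_right b hK
  constructor
  · intro h
    obtain ⟨a, ha, hbit⟩ := exists_bitInterp_eq hW
    obtain ⟨hdat, hex⟩ := (closedOn_bitInterp_iff hB).1 (hbit ▸ Chase.closedOn)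
    obtain ⟨n, -, hn⟩ := h a ha (fun x hx => hbit ▸ .fact (List.mem_toFinset.2 hx)) hdat hex
    exact ⟨_, fun v => digit_lt hB n _, hbit ▸ hn⟩
  · rintro ⟨s, hs, hq⟩ a - hfact hdat hex
    obtain ⟨n, hn, hv⟩ := exists_digitAssignment_eq (Encodable.encode q + 1) hs
    have hchase : ∀ P l, Chase Γ I.toFinset K (· < b) P l → bitInterp a P l := fun P l h =>
      h.of_closedOn hΓ ((closedOn_bitInterp_iff hB).2 ⟨hdat, hex⟩) hB
        (fun x hx t ht => (hI x (List.mem_toFinset.1 hx) t ht).trans_le (Nat.le_add_left K b))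
        (fun y hy _ => Nat.add_lt_add_right hy K) fun x hx => hfact x (List.mem_toFinset.1 hx)
    exact ⟨n, hn, (holds_digitAssignment_iff hv (Nat.lt_succ_self _)).2 (hq.mono hchase)⟩

end FiniteCheck

theorem pair_le_pair {a b c d : ℕ} (hac : a ≤ c) (hbd : b ≤ d) : Nat.pair a b ≤ Nat.pair c d :=
  ((strictMono_nat_of_lt_succ fun n => Nat.pair_lt_pair_left b n.lt_succ_self).monotone hac).trans
    ((strictMono_nat_of_lt_succ fun n => Nat.pair_lt_pair_right c n.lt_succ_self).monotone hbd)

theorem encode_le_encode_replicate {B n : ℕ} {l : List ℕ} (hl : l.length ≤ n)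
    (hB : ∀ m ∈ l, m ≤ B) : Encodable.encode l ≤ Encodable.encode (List.replicate n B) := by
  induction l generalizing n with
  | nil => exact Nat.zero_le _
  | cons m l ih =>
    obtain ⟨n, rfl⟩ := Nat.exists_eq_add_of_le' (Nat.one_le_of_lt hl)
    obtain ⟨hm, hB⟩ := List.forall_mem_cons.1 hB
    rw [List.replicate_succ, Encodable.encode_list_cons, Encodable.encode_list_cons]
    exact Nat.succ_le_succ (pair_le_pair hm (ih (Nat.le_of_succ_le_succ hl) hB))

/-- A bound for the codes of the atoms over the signature of `R_M` with arguments at most `B`. -/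
def atomCodeBound (p B : ℕ) : ℕ := Encodable.encode (6 + 2 * p, List.replicate 3 B) + 1

theorem Interp.toNum_bound {p : ℕ} {X : Interp} {P : ℕ} {l : List ℕ} (h : X.toNum p P l) :
    P ≤ 6 + 2 * p ∧ l.length ≤ 3 := by
  unfold Interp.toNum at h
  simp only [pEnd, pFlood, pS0, pS, pG, pR, pT] at h
  split at h
  · exact ⟨by omega, by simp⟩
  · refine ⟨?_, by simp⟩
    obtain h | h | h | ⟨i, hi, h, -⟩ := h <;> omega
  · obtain ⟨i, hi, h, -⟩ := h
    exact ⟨by omega, by simp⟩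
  · exact h.elim

theorem card_varsF_le {q : Finset Atom} {K : ℕ} (hq : ∀ a ∈ q, ∀ t ∈ a.2, code t < K) :
    (varsF q).card ≤ K := by
  rw [← Finset.card_range K]
  refine Finset.card_le_card_of_injOn (fun v => code (Sum.inr v)) (fun v hv => ?_)
    (Encodable.encode_injective.comp Sum.inr_injective).injOn
  obtain ⟨a, ha, hv⟩ := mem_varsF.1 hv
  exact Finset.mem_coe.2 (Finset.mem_range.2 (hq a ha _ hv))

section Entailment

variable {M : TCM} {I q : List Atom} {K b : ℕ} {ri qi : ℕ → ℕ}

theorem encode_lt_atomCodeBound {I : Finset Atom} (hr : ∀ i, 0 < ri i) (hq : ∀ i, 0 < qi i)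
    (hsig : ∀ a ∈ I, InSig M a) (hI : ∀ a ∈ I, ∀ t ∈ a.2, code t < K)
    {P : ℕ} {l : List ℕ} (h : Chase (ruleSystem M.p ri qi) I K (· < b) P l) :
    Encodable.encode (P, l) < atomCodeBound M.p (b + K) := by
  obtain ⟨hP, hl⟩ := Interp.toNum_bound <| FullChase.localize hr hq hsig hI
    (L := fun _ => True) (fun _ _ _ => id) (fun _ _ => trivial) (h.mono fun _ _ => trivial)
  have hmem : ∀ n ∈ l, n ≤ b + K := h.forall_mem (wellFormed_ruleSystem hr hq)
    (fun a ha t ht => (hI a ha t ht).le.trans (Nat.le_add_left K b))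
    fun s hs1 hs0 _ _ => hs0 ▸ Nat.add_le_add_right hs1.le K
  exact Nat.lt_succ_of_le (pair_le_pair hP (encode_le_encode_replicate hl hmem))

theorem finiteCheck_ruleSystem_iff_entails (hK : 0 < K) (hsig : ∀ a ∈ I, InSig M a)
    (hI : ∀ a ∈ I, ∀ t ∈ a.2, code t < K) (hq : ∀ a ∈ q, ∀ t ∈ a.2, code t < K) :
    FiniteCheck (ruleSystem M.p M.ri M.qi) K (K * (K + 1))
        (atomCodeBound M.p (K * (K + 1) + K)) I q ↔
      Entails (RM M) (I.toFinset : Set Atom) (q.toFinset : Set Atom) := by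
  have hri : ∀ i, 0 < M.ri i := fun i => (qr_pos M i).2
  have hqi : ∀ i, 0 < M.qi i := fun i => (qr_pos M i).1
  have hΓ := wellFormed_ruleSystem (p := M.p) hri hqi
  have hsig' : ∀ a ∈ I.toFinset, InSig M a := by simpa only [List.mem_toFinset] using hsig
  have hI' : ∀ a ∈ I.toFinset, ∀ t ∈ a.2, code t < K := by simpa only [List.mem_toFinset] using hI
  have hq' : ∀ a ∈ q.toFinset, ∀ t ∈ a.2, code t < K := by simpa only [List.mem_toFinset] using hq
  have hmatch := exists_match_fullChase_iff hri hqi hK hsig' hI' hq' (card_varsF_le hq')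
  rw [← toFinset_ruleSystem, entails_iff_fullChase hΓ hK hI' hq',
    finiteCheck_iff hΓ hK hI fun P l => encode_lt_atomCodeBound hri hqi hsig' hI']
  simp only [List.mem_toFinset] at hmatch ⊢
  constructor
  · rintro ⟨s, -, hs⟩
    exact ⟨s, hs.mono fun _ _ => Chase.mono fun _ _ => trivial⟩
  · intro h
    obtain ⟨s, hlt, hs⟩ := hmatch.1 h
    exact ⟨s, fun v => (hlt v).trans_le (Nat.le_add_right _ K), hs⟩

end Entailment

/-! ### Primitive recursiveness of the finite check -/

section Primrec

variable {α β : Type*} [Primcodable α] [Primcodable β]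

theorem primrecPred_imp {p q : α → Prop} (hp : PrimrecPred p) (hq : PrimrecPred q) :
    PrimrecPred fun a => p a → q a :=
  (hp.not.or hq).of_eq fun _ => imp_iff_not_or.symm

theorem primrecPred_forall_mem {f : α → List β} {R : α → β → Prop} (hf : Primrec f)
    (hR : PrimrecRel R) : PrimrecPred fun a => ∀ b ∈ f a, R a b :=
  (PrimrecRel.forall_mem_list hR.swap).comp hf .id

theorem primrecPred_forall_lt {f : α → ℕ} {R : α → ℕ → Prop} (hf : Primrec f)
    (hR : PrimrecRel R) : PrimrecPred fun a => ∀ n < f a, R a n :=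
  (primrecPred_forall_mem (Primrec.list_range.comp hf) hR).of_eq fun _ => by
    simp only [List.mem_range]

theorem primrecPred_exists_lt {f : α → ℕ} {R : α → ℕ → Prop} (hf : Primrec f)
    (hR : PrimrecRel R) : PrimrecPred fun a => ∃ n < f a, R a n :=
  (primrecPred_forall_lt (R := fun a n => ¬R a n) hf hR.not).not.of_eq fun _ => by
    simp only [not_forall, not_not, exists_prop]

theorem primrec_find? {f : α → List β} {p : α → β → Bool} (hf : Primrec f) (hp : Primrec₂ p) :
    Primrec fun a => (f a).find? (p a) :=
  (Primrec.list_getElem?.comp hf (Primrec.list_findIdx hf hp)).of_eq fun _ =>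
    List.find?_eq_getElem?_findIdx.symm

theorem primrec_nat_pow : Primrec₂ ((· ^ ·) : ℕ → ℕ → ℕ) := Primrec₂.unpaired'.1 Nat.Primrec.pow

theorem primrecRel_dvd : PrimrecRel ((· ∣ ·) : ℕ → ℕ → Prop) :=
  (Primrec.eq.comp (Primrec.nat_mod.comp .snd .fst) (.const 0)).of_eq fun _ =>
    Nat.dvd_iff_mod_eq_zero.symm

theorem primrec_digitAssignment {B n : α → ℕ} {v : α → Var} (hB : Primrec B) (hn : Primrec n)
    (hv : Primrec v) : Primrec fun a => digitAssignment (B a) (n a) (v a) :=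
  Primrec.nat_mod.comp
    (Primrec.nat_div.comp hn (primrec_nat_pow.comp hB (Primrec.encode.comp hv))) hB

theorem primrec_eval_digitAssignment {B n : α → ℕ} {t : α → FTerm} (hB : Primrec B)
    (hn : Primrec n) (ht : Primrec t) : Primrec fun a => eval (digitAssignment (B a) (n a)) (t a) :=
  (Primrec.sumCasesOn ht (Primrec.encode.comp (Primrec.sumInl.comp .snd)).to₂
    (primrec_digitAssignment (hB.comp .fst) (hn.comp .fst) .snd).to₂).of_eq fun a => by
      rcases t a with c | v <;> rfl

theorem primrecPred_bitInterp {a P : α → ℕ} {l : α → List ℕ} (ha : Primrec a) (hP : Primrec P)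
    (hl : Primrec l) : PrimrecPred fun x => bitInterp (a x) (P x) (l x) :=
  Primrec.eq.comp (Primrec.nat_mod.comp (Primrec.nat_div.comp ha
    (primrec_nat_pow.comp (.const 2) (Primrec.encode.comp (hP.pair hl)))) (.const 2)) (.const 1)

theorem primrecPred_holds {B a n : α → ℕ} {L : α → List Atom} (hB : Primrec B) (ha : Primrec a)
    (hn : Primrec n) (hL : Primrec L) :
    PrimrecPred fun x => Holds (bitInterp (a x)) (digitAssignment (B x) (n x)) (L x) :=
  primrecPred_forall_mem hL <| primrecPred_bitInterp (ha.comp .fst) (Primrec.fst.comp .snd) <|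
    Primrec.list_map (Primrec.snd.comp .snd) <|
      (primrec_eval_digitAssignment (hB.comp (Primrec.fst.comp .fst))
        (hn.comp (Primrec.fst.comp .fst)) .snd).to₂

theorem primrecPred_holds_imp_holds {B a n : α → ℕ} {ρ : α → ListRule} (hB : Primrec B)
    (ha : Primrec a) (hn : Primrec n) (hρ : Primrec ρ) :
    PrimrecPred fun x => Holds (bitInterp (a x)) (digitAssignment (B x) (n x)) (ρ x).1 →
      Holds (bitInterp (a x)) (digitAssignment (B x) (n x)) (ρ x).2 :=
  primrecPred_imp (primrecPred_holds hB ha hn (Primrec.fst.comp hρ))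
    (primrecPred_holds hB ha hn (Primrec.snd.comp hρ))

theorem primrecPred_respectsRule {B a : α → ℕ} {ρ : α → ListRule} (hB : Primrec B) (ha : Primrec a)
    (hρ : Primrec ρ) : PrimrecPred fun x => RespectsRule (B x) (a x) (ρ x) :=
  primrecPred_forall_lt
    (primrec_nat_pow.comp hB (Primrec.nat_add.comp (Primrec.encode.comp hρ) (.const 1)))
    (primrecPred_holds_imp_holds (hB.comp .fst) (ha.comp .fst) .snd (hρ.comp .fst))

theorem primrecPred_respectsExRule {K b B a : α → ℕ} {ρ : α → ListRule} (hK : Primrec K)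
    (hb : Primrec b) (hB : Primrec B) (ha : Primrec a) (hρ : Primrec ρ) :
    PrimrecPred fun x => RespectsExRule (K x) (b x) (B x) (a x) (ρ x) := by
  have hval : ∀ i, Primrec fun x : α × ℕ => digitAssignment (B x.1) x.2 (Sum.inl i) := fun _ =>
    primrec_digitAssignment (hB.comp .fst) .snd (.const _)
  exact primrecPred_forall_lt
    (primrec_nat_pow.comp hB (Primrec.nat_add.comp (Primrec.encode.comp hρ) (.const 3)))
    (primrecPred_imp (Primrec.nat_lt.comp (hval 1) (hb.comp .fst)) <|
      primrecPred_imp (Primrec.eq.comp (hval 0) (Primrec.nat_add.comp (hval 1) (hK.comp .fst))) <|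
        primrecPred_holds_imp_holds (hB.comp .fst) (ha.comp .fst) .snd (hρ.comp .fst))

theorem primrecPred_finiteCheck {Γ : α → RuleSystem} {K b W : α → ℕ} {I q : α → List Atom}
    (hdat : Primrec fun x => (Γ x).datalog) (hex : Primrec fun x => (Γ x).exRule)
    (hK : Primrec K) (hb : Primrec b) (hW : Primrec W) (hI : Primrec I) (hq : Primrec q) :
    PrimrecPred fun x => FiniteCheck (Γ x) (K x) (b x) (W x) (I x) (q x) := by
  have hB : Primrec fun x => b x + K x := Primrec.nat_add.comp hb hK
  have hfacts : PrimrecPred fun x : α × ℕ => ∀ y ∈ I x.1, bitInterp x.2 y.1 (y.2.map code) :=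
    primrecPred_forall_mem (hI.comp .fst) <| primrecPred_bitInterp (Primrec.snd.comp .fst)
      (Primrec.fst.comp .snd) <|
        Primrec.list_map (Primrec.snd.comp .snd) (Primrec.encode.comp .snd).to₂
  have hrules : PrimrecPred fun x : α × ℕ =>
      ∀ ρ ∈ (Γ x.1).datalog, RespectsRule (b x.1 + K x.1) x.2 ρ :=
    primrecPred_forall_mem (hdat.comp .fst) <|
      primrecPred_respectsRule (hB.comp (Primrec.fst.comp .fst)) (Primrec.snd.comp .fst) .snd
  have hmatch : PrimrecPred fun x : α × ℕ => ∃ n < (b x.1 + K x.1) ^ (Encodable.encode (q x.1) + 1),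
      Holds (bitInterp x.2) (digitAssignment (b x.1 + K x.1) n) (q x.1) :=
    primrecPred_exists_lt
      (primrec_nat_pow.comp (hB.comp .fst)
        (Primrec.nat_add.comp (Primrec.encode.comp (hq.comp .fst)) (.const 1)))
      (primrecPred_holds (hB.comp (Primrec.fst.comp .fst)) (Primrec.snd.comp .fst) .snd
        (hq.comp (Primrec.fst.comp .fst)))
  exact primrecPred_forall_lt (primrec_nat_pow.comp (.const 2) hW) <|
    primrecPred_imp hfacts <| primrecPred_imp hrules <| primrecPred_imp
      (primrecPred_respectsExRule (hK.comp .fst) (hb.comp .fst) (hB.comp .fst) .snd (hex.comp .fst))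
      hmatch

end Primrec

/-! ### Primitive recursiveness of the rule set -/

section RuleSet

variable {α β : Type*} [Primcodable α] [Primcodable β]

theorem primrec_list_one {f : α → β} (hf : Primrec f) : Primrec fun a => [f a] :=
  Primrec.list_cons.comp hf (.const [])

theorem primrec_list_two {f g : α → β} (hf : Primrec f) (hg : Primrec g) :
    Primrec fun a => [f a, g a] :=
  Primrec.list_cons.comp hf (primrec_list_one hg)

theorem primrec_list_three {f g h : α → β} (hf : Primrec f) (hg : Primrec g) (hh : Primrec h) :
    Primrec fun a => [f a, g a, h a] :=
  Primrec.list_cons.comp hf (primrec_list_two hg hh)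

theorem primrec_vt : Primrec vt := Primrec.sumInr.comp Primrec.sumInl

theorem primrec_pR : Primrec pR :=
  Primrec.nat_add.comp (.const 5) (Primrec.nat_mul.comp (.const 2) .id)

theorem primrec_pT : Primrec pT :=
  Primrec.nat_add.comp (.const 6) (Primrec.nat_mul.comp (.const 2) .id)

theorem primrec_pathVar {base n j : α → ℕ} (a b : ℕ) (hbase : Primrec base) (hn : Primrec n)
    (hj : Primrec j) : Primrec fun x => pathVar a b (base x) (n x) (j x) :=
  Primrec.ite (Primrec.eq.comp hj (.const 0)) (.const (vt a)) <|
    Primrec.ite (Primrec.eq.comp hj hn) (.const (vt b))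
      (primrec_vt.comp (Primrec.nat_add.comp hbase hj))

theorem primrec_listSPath {base n : α → ℕ} (a b : ℕ) (hbase : Primrec base) (hn : Primrec n) :
    Primrec fun x => listSPath a b (base x) (n x) := by
  have hpath : ∀ {j : α × ℕ → ℕ}, Primrec j →
      Primrec fun x : α × ℕ => pathVar a b (base x.1) (n x.1) (j x) :=
    primrec_pathVar a b (hbase.comp .fst) (hn.comp .fst)
  exact Primrec.list_map (Primrec.list_range.comp hn) <| Primrec.pair (.const pS) <|
    primrec_list_two (hpath .snd) (hpath (Primrec.succ.comp .snd))

theorem primrec_atom {P : α → ℕ} (hP : Primrec P) (l : List FTerm) :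
    Primrec fun x => ((P x, l) : Atom) :=
  hP.pair (.const l)

theorem primrec_listRuleR {p i : α → ℕ} (hp : Primrec p) (hi : Primrec i) :
    Primrec fun x => listRuleR (p x) (i x) :=
  (primrec_list_two (primrec_atom (primrec_pR.comp hi) _) (.const _)).pair <|
    primrec_list_one <| primrec_atom
      (primrec_pR.comp (Primrec.nat_mod.comp (Primrec.succ.comp hi) hp)) _

theorem primrec_listRuleT {r q i : α → ℕ} (hr : Primrec r) (hq : Primrec q) (hi : Primrec i) :
    Primrec fun x => listRuleT (r x) (q x) (i x) := by
  have hT : Primrec fun x => pT (i x) := primrec_pT.comp hi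
  exact (Primrec.list_cons.comp (primrec_atom hT _) <| Primrec.list_append.comp
    (primrec_listSPath 1 3 (.const 10) hr)
    (primrec_listSPath 2 4 (Primrec.nat_add.comp (.const 11) hr) hq)).pair
    (primrec_list_one (primrec_atom hT _))

theorem primrec_listRuleGStep : Primrec listRuleGStep :=
  (primrec_list_three (.const _) (primrec_atom primrec_pR _) (primrec_atom primrec_pT _)).pair
    (.const _)

theorem primrec_listRuleFloodGen : Primrec listRuleFloodGen :=
  Primrec.pair (.const _) <| Primrec.list_cons.comp (.const _) <|
    Primrec.list_flatMap Primrec.list_range <| primrec_list_two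
      (primrec_atom (primrec_pR.comp .snd) _) (primrec_atom (primrec_pT.comp .snd) _)

theorem primrec_listRuleEx : Primrec listRuleEx :=
  Primrec.pair (.const _) <| Primrec.list_cons.comp (.const _) <|
    Primrec.list_cons.comp (.const _) <|
      Primrec.list_map Primrec.list_range (primrec_atom (primrec_pT.comp .snd) _)

theorem primrec_datalog_ruleSystem {p : α → ℕ} {r q : α → ℕ → ℕ} (hp : Primrec p)
    (hr : Primrec₂ r) (hq : Primrec₂ q) :
    Primrec fun x => (ruleSystem (p x) (r x) (q x)).datalog := by
  have hindexed : Primrec fun x => (List.range (p x)).flatMap fun i =>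
      [listRuleR (p x) i, listRuleT (r x i) (q x i) i, listRuleGStep i] :=
    Primrec.list_flatMap (Primrec.list_range.comp hp) <| primrec_list_three
      (primrec_listRuleR (hp.comp .fst) .snd) (primrec_listRuleT hr hq .snd)
      (primrec_listRuleGStep.comp .snd)
  exact Primrec.list_cons.comp (.const _) <| Primrec.list_cons.comp (.const _) <|
    Primrec.list_cons.comp (.const _) <| Primrec.list_cons.comp (.const _) <|
      Primrec.list_cons.comp (primrec_listRuleFloodGen.comp hp) hindexed

end RuleSet

/-! ### Primitive recursiveness of the prime encoding -/

theorem primrecPred_prime : PrimrecPred Nat.Prime := by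
  have hdvd : PrimrecRel fun n m : ℕ => m ∣ n → m = 1 :=
    primrecPred_imp (primrecRel_dvd.comp .snd .fst) (Primrec.eq.comp .snd (.const 1))
  exact ((Primrec.nat_le.comp (.const 2) .id).and (primrecPred_forall_lt .id hdvd)).of_eq fun _ =>
    Nat.prime_def_lt.symm

theorem nextPrime_le (n : ℕ) : nextPrime n ≤ 2 * n + 2 := by
  rcases n.eq_zero_or_pos with rfl | hn
  · exact Nat.find_min' _ ⟨one_le_two, Nat.prime_two⟩
  · obtain ⟨q, hq, hlt, hle⟩ := Nat.exists_prime_lt_and_le_two_mul n hn.ne'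
    exact (Nat.find_min' _ ⟨hlt, hq⟩).trans (hle.trans (Nat.le_add_right _ 2))

theorem primrec_nextPrime : Primrec nextPrime := by
  have hprime : PrimrecRel fun n k : ℕ => n + 1 ≤ k ∧ k.Prime :=
    (Primrec.nat_le.comp (Primrec.succ.comp .fst) .snd).and (primrecPred_prime.comp .snd)
  have hmin : PrimrecRel fun n k : ℕ => ∀ j < k, ¬(n + 1 ≤ j ∧ j.Prime) :=
    primrecPred_forall_lt .snd (hprime.comp (Primrec.fst.comp .fst) .snd).not
  refine Primrec.of_graph ⟨fun n => 2 * n + 2, ?_, nextPrime_le⟩ ?_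
  · exact Primrec.nat_add.comp (Primrec.nat_mul.comp (.const 2) .id) (.const 2)
  · exact (hprime.and hmin).of_eq fun x =>
      (Nat.find_eq_iff (Nat.exists_infinite_primes (x.1 + 1))).symm

theorem primrec_prm : Primrec prm := by
  refine (Primrec.nat_rec₁ 2 (primrec_nextPrime.comp .snd).to₂).of_eq fun n => ?_
  induction n with
  | zero => rfl
  | succ n ih => exact congrArg nextPrime ih

/-- The product of the first `n` primes. -/
def primeProd (n : ℕ) : ℕ := ∏ i ∈ Finset.range n, prm i

theorem primrec_primeProd : Primrec primeProd := by
  refine (Primrec.nat_rec₁ 1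
    (Primrec.nat_mul.comp .snd (primrec_prm.comp .fst)).to₂).of_eq fun n => ?_
  induction n with
  | zero => rfl
  | succ n ih => rw [primeProd, Finset.prod_range_succ, ← primeProd, ← ih]

theorem primrec_gcd : Primrec₂ Nat.gcd := by
  have hcommon : PrimrecRel fun (x : ℕ × ℕ) d => d ∣ x.1 ∧ d ∣ x.2 :=
    (primrecRel_dvd.comp .snd (Primrec.fst.comp .fst)).and
      (primrecRel_dvd.comp .snd (Primrec.snd.comp .fst))
  refine (Primrec.nat_findGreatest Primrec.nat_add hcommon).of_eq fun ⟨a, b⟩ => ?_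
  simp only [Nat.findGreatest_eq_iff]
  refine ⟨?_, fun _ => ⟨Nat.gcd_dvd_left a b, Nat.gcd_dvd_right a b⟩, fun d hd hle h => ?_⟩
  · rcases a.eq_zero_or_pos with rfl | ha
    · rw [Nat.gcd_zero_left, Nat.zero_add]
    · exact (Nat.gcd_le_left b ha).trans (Nat.le_add_right a b)
  · have hpos : 0 < Nat.gcd a b := Nat.pos_of_ne_zero fun h0 => by
      rw [Nat.gcd_eq_zero_iff] at h0
      omega
    exact hd.not_ge (Nat.le_of_dvd hpos (Nat.dvd_gcd h.1 h.2))

/-! ### Primitive recursiveness of the transition table -/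

/-- An entry of a transition table, mapping a state and two counter tests to a state and two
counter increments. -/
abbrev Transition : Type := (ℕ × Bool × Bool) × (ℕ × ℤ × ℤ)

/-- The data of a machine: its number of states and its transition table. -/
abbrev RawMachine : Type := ℕ × List Transition

/-- The numerator of the factor by which the transition `e` changes encoded configurations of a
machine with `m` states. -/
def Transition.num (m : ℕ) (e : Transition) : ℕ :=
  prm e.2.1 * prm (m + 2) *
    (if e.2.2.1 = 1 then prm m else 1) * (if e.2.2.2 = 1 then prm (m + 1) else 1)

/-- The denominator that goes with `Transition.num`. -/
def Transition.den (m : ℕ) (e : Transition) : ℕ :=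
  prm e.1.1 *
    (if e.1.2.1 = true ∧ e.2.2.1 = -1 then prm m else 1) *
    (if e.1.2.2 = true ∧ e.2.2.2 = -1 then prm (m + 1) else 1)

/-- The transition that applies to configurations with residue `i`, if there is one. -/
def RawMachine.transition? (x : RawMachine) (i : ℕ) : Option Transition :=
  ((List.range x.1).find? fun s => decide (prm s ∣ i)).bind fun s =>
    x.2.find? fun e => decide (e.1 = (s, decide (prm x.1 ∣ i), decide (prm (x.1 + 1) ∣ i)))

/-- The fraction `a / b` in lowest terms. -/
def lowestTerms (a b : ℕ) : ℕ × ℕ := (a / Nat.gcd a b, b / Nat.gcd a b)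

/-- `TCM.qr` as a function of the data of the machine. -/
def RawMachine.qr (x : RawMachine) (i : ℕ) : ℕ × ℕ :=
  ((RawMachine.transition? x i).map fun e => lowestTerms (e.num x.1) (e.den x.1)).getD (1, 1)

theorem increment_eq_one_iff (b : Bool) (d : ℤ) : (if b then d else max d 0) = 1 ↔ d = 1 := by
  cases b
  · simp only [Bool.false_eq_true, if_false]
    omega
  · rfl

theorem increment_eq_neg_one_iff (b : Bool) (d : ℤ) :
    (if b then d else max d 0) = -1 ↔ b = true ∧ d = -1 := by
  cases b
  · simp only [Bool.false_eq_true, if_false, false_and, iff_false]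
    omega
  · simp only [if_true, true_and]

theorem RawMachine.qr_eq (M : TCM) (i : ℕ) : RawMachine.qr (M.m, M.δ) i = M.qr i := by
  simp only [TCM.qr, RawMachine.qr, RawMachine.transition?, TCM.stateOf, TCM.step]
  cases (List.range M.m).find? fun s => decide (prm s ∣ i) with
  | none => rfl
  | some s =>
    simp only [Option.bind_some]
    cases h : M.δ.find? fun e =>
        decide (e.1 = (s, decide (prm M.m ∣ i), decide (prm (M.m + 1) ∣ i))) with
    | none => rfl
    | some e =>
      have hkey : e.1 = (s, decide (prm M.m ∣ i), decide (prm (M.m + 1) ∣ i)) := by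
        simpa only [decide_eq_true_eq] using List.find?_some h
      simp only [Option.map_some, Option.getD_some, lowestTerms, Transition.num, Transition.den,
        hkey, increment_eq_one_iff, increment_eq_neg_one_iff]

instance primcodableInt : Primcodable ℤ := Primcodable.ofEquiv ℕ Equiv.intEquivNat

section Machine

variable {α : Type*} [Primcodable α]

theorem primrec_prm_ite {c : α → Prop} [DecidablePred c] {n : α → ℕ} (hc : PrimrecPred c)
    (hn : Primrec n) : Primrec fun x => if c x then prm (n x) else 1 :=
  Primrec.ite hc (primrec_prm.comp hn) (.const 1)

theorem primrec_num : Primrec₂ Transition.num := by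
  have hmove : Primrec fun x : ℕ × Transition => x.2.2.2 :=
    Primrec.snd.comp (Primrec.snd.comp .snd)
  have hstate : Primrec fun x : ℕ × Transition => prm x.2.2.1 * prm (x.1 + 2) :=
    Primrec.nat_mul.comp (primrec_prm.comp (Primrec.fst.comp (Primrec.snd.comp .snd)))
      (primrec_prm.comp (Primrec.nat_add.comp .fst (.const 2)))
  have h1 : Primrec fun x : ℕ × Transition => if x.2.2.2.1 = 1 then prm x.1 else 1 :=
    primrec_prm_ite (Primrec.eq.comp (Primrec.fst.comp hmove) (.const 1)) .fst
  have h2 : Primrec fun x : ℕ × Transition => if x.2.2.2.2 = 1 then prm (x.1 + 1) else 1 :=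
    primrec_prm_ite (Primrec.eq.comp (Primrec.snd.comp hmove) (.const 1)) (Primrec.succ.comp .fst)
  exact Primrec.nat_mul.comp (Primrec.nat_mul.comp hstate h1) h2

theorem primrec_den : Primrec₂ Transition.den := by
  have htest : Primrec fun x : ℕ × Transition => x.2.1.2 :=
    Primrec.snd.comp (Primrec.fst.comp .snd)
  have hmove : Primrec fun x : ℕ × Transition => x.2.2.2 :=
    Primrec.snd.comp (Primrec.snd.comp .snd)
  have hstate : Primrec fun x : ℕ × Transition => prm x.2.1.1 :=
    primrec_prm.comp (Primrec.fst.comp (Primrec.fst.comp .snd))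
  have h1 : Primrec fun x : ℕ × Transition =>
      if x.2.1.2.1 = true ∧ x.2.2.2.1 = -1 then prm x.1 else 1 :=
    primrec_prm_ite ((Primrec.eq.comp (Primrec.fst.comp htest) (.const true)).and
      (Primrec.eq.comp (Primrec.fst.comp hmove) (.const (-1)))) .fst
  have h2 : Primrec fun x : ℕ × Transition =>
      if x.2.1.2.2 = true ∧ x.2.2.2.2 = -1 then prm (x.1 + 1) else 1 :=
    primrec_prm_ite ((Primrec.eq.comp (Primrec.snd.comp htest) (.const true)).and
      (Primrec.eq.comp (Primrec.snd.comp hmove) (.const (-1)))) (Primrec.succ.comp .fst)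
  exact Primrec.nat_mul.comp (Primrec.nat_mul.comp hstate h1) h2

theorem primrec_lowestTerms : Primrec₂ lowestTerms :=
  (Primrec.nat_div.comp .fst primrec_gcd).pair (Primrec.nat_div.comp .snd primrec_gcd)

theorem primrec_transition? : Primrec₂ RawMachine.transition? := by
  have hdvd : ∀ {n : (RawMachine × ℕ) × ℕ → ℕ}, Primrec n →
      Primrec fun y => decide (prm (n y) ∣ y.1.2) := fun hn =>
    (primrecRel_dvd.comp (primrec_prm.comp hn) (Primrec.snd.comp .fst)).decide
  have hm : Primrec fun y : (RawMachine × ℕ) × ℕ => y.1.1.1 :=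
    Primrec.fst.comp (Primrec.fst.comp .fst)
  exact Primrec.option_bind
    (primrec_find? (Primrec.list_range.comp (Primrec.fst.comp .fst)) (hdvd .snd).to₂)
    (primrec_find? (Primrec.snd.comp (Primrec.fst.comp .fst)) (Primrec.eq.comp
      (Primrec.fst.comp .snd) ((Primrec.snd.pair ((hdvd hm).pair
        (hdvd (Primrec.succ.comp hm)))).comp .fst)).decide.to₂).to₂

theorem RawMachine.primrec_qr : Primrec₂ RawMachine.qr := by
  have hm : Primrec fun y : (RawMachine × ℕ) × Transition => y.1.1.1 :=
    Primrec.fst.comp (Primrec.fst.comp .fst)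
  exact Primrec.option_getD.comp (Primrec.option_map primrec_transition?
    (primrec_lowestTerms.comp (primrec_num.comp hm .snd) (primrec_den.comp hm .snd)).to₂)
    (.const (1, 1))

end Machine

/-! ### The decision procedure -/

/-- A machine, an instance and a query, the latter two as lists of atoms. -/
abbrev RawInput : Type := RawMachine × List Atom × List Atom

/-- A number exceeding the codes of all terms of the input. -/
def RawInput.termBound (x : RawInput) : ℕ :=
  Encodable.encode x.2.1 + Encodable.encode x.2.2 + 1

/-- The rules `R_M` for the machine of the input. -/
def RawInput.rules (x : RawInput) : RuleSystem :=
  ruleSystem (primeProd (x.1.1 + 3)) (fun i => (RawMachine.qr x.1 i).2)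
    fun i => (RawMachine.qr x.1 i).1

/-- The finite check for an input, with parameters as in `finiteCheck_ruleSystem_iff_entails`. -/
def RawInput.Check (x : RawInput) : Prop :=
  let K := RawInput.termBound x
  FiniteCheck (RawInput.rules x) K (K * (K + 1))
    (atomCodeBound (primeProd (x.1.1 + 3)) (K * (K + 1) + K)) x.2.1 x.2.2

theorem primrec_atomCodeBound : Primrec₂ atomCodeBound :=
  Primrec.succ.comp <| Primrec.encode.comp <|
    (Primrec.nat_add.comp (.const 6) (Primrec.nat_mul.comp (.const 2) .fst)).pair <|
      primrec_list_three .snd .snd .snd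

theorem RawInput.primrecPred_check : PrimrecPred RawInput.Check := by
  have hI : Primrec fun x : RawInput => x.2.1 := Primrec.fst.comp .snd
  have hq : Primrec fun x : RawInput => x.2.2 := Primrec.snd.comp .snd
  have hK : Primrec RawInput.termBound := Primrec.succ.comp
    (Primrec.nat_add.comp (Primrec.encode.comp hI) (Primrec.encode.comp hq))
  have hb : Primrec fun x => RawInput.termBound x * (RawInput.termBound x + 1) :=
    Primrec.nat_mul.comp hK (Primrec.succ.comp hK)
  have hp : Primrec fun x : RawInput => primeProd (x.1.1 + 3) :=
    primrec_primeProd.comp (Primrec.nat_add.comp (Primrec.fst.comp .fst) (.const 3))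
  have hqr : Primrec₂ fun (x : RawInput) i => RawMachine.qr x.1 i :=
    RawMachine.primrec_qr.comp (Primrec.fst.comp .fst) .snd
  exact primrecPred_finiteCheck
    (primrec_datalog_ruleSystem hp (Primrec.snd.comp hqr) (Primrec.fst.comp hqr))
    (primrec_listRuleEx.comp hp) hK hb
    (primrec_atomCodeBound.comp hp (Primrec.nat_add.comp hb hK)) hI hq

/-- The decision procedure on encoded inputs. -/
def decideEntails (n : ℕ) : Bool :=
  ((Encodable.decode (α := RawInput) n).map fun x => decide (RawInput.Check x)).getD false

theorem primrec_decideEntails : Primrec decideEntails :=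
  Primrec.option_getD.comp
    (Primrec.option_map Primrec.decode (RawInput.primrecPred_check.decide.comp .snd).to₂)
    (.const false)

theorem RawInput.check_iff_entails {M : TCM} {I q : List Atom} (hsig : ∀ a ∈ I, InSig M a) :
    RawInput.Check ((M.m, M.δ), I, q) ↔
      Entails (RM M) (I.toFinset : Set Atom) (q.toFinset : Set Atom) := by
  have hrules : RawInput.rules ((M.m, M.δ), I, q) = ruleSystem M.p M.ri M.qi := by
    simp only [RawInput.rules, RawMachine.qr_eq]
    rfl
  rw [RawInput.Check, hrules]
  have hcode : ∀ {L : List Atom}, Encodable.encode L < termBound ((M.m, M.δ), I, q) →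
      ∀ a ∈ L, ∀ t ∈ a.2, code t < termBound ((M.m, M.δ), I, q) := fun hL a ha t ht =>
    (code_le_encode ⟨a, ha, ht⟩).trans_lt hL
  exact finiteCheck_ruleSystem_iff_entails (Nat.succ_pos _) hsig
    (hcode (Nat.lt_succ_of_le (Nat.le_add_right _ _)))
    (hcode (Nat.lt_succ_of_le (Nat.le_add_left _ _)))

theorem exists_decode_encode_finset (I : Finset Atom) :
    ∃ l : List Atom, Encodable.decode (Encodable.encode I) = some l ∧ l.toFinset = I := by
  have h : (Encodable.decode (α := List Atom) (Encodable.encode I)).map Multiset.ofList =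
      some I.1 := Encodable.encodek I.1
  obtain ⟨l, hl, hI⟩ := Option.map_eq_some_iff.1 h
  exact ⟨l, hl, by ext a; rw [List.mem_toFinset, ← Finset.mem_val, ← hI, Multiset.mem_coe]⟩

theorem exists_decode_encode_input (M : TCM) (I q : Finset Atom) : ∃ lI lq : List Atom,
    Encodable.decode (α := RawInput) (Encodable.encode (encodeTCM M, I, q)) =
      some ((M.m, M.δ), lI, lq) ∧ lI.toFinset = I ∧ lq.toFinset = q := by
  obtain ⟨lI, hlI, hI⟩ := exists_decode_encode_finset I
  obtain ⟨lq, hlq, hq⟩ := exists_decode_encode_finset q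
  have hM : Encodable.decode (encodeTCM M) = some (M.m, M.δ) := Encodable.encodek (M.m, M.δ)
  refine ⟨lI, lq, ?_, hI, hq⟩
  simp only [Encodable.encode_prod_val, Encodable.decode_prod_val, Nat.unpair_pair,
    Encodable.encode_nat, hM, hlI, hlq, Option.bind_some, Option.map_some]

theorem decideEntails_eq_true_iff {M : TCM} {I q : Finset Atom} (hsig : ∀ a ∈ I, InSig M a) :
    decideEntails (Encodable.encode (encodeTCM M, I, q)) = true ↔
      Entails (RM M) (I : Set Atom) (q : Set Atom) := by
  obtain ⟨lI, lq, hdecode, rfl, rfl⟩ := exists_decode_encode_input M I q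
  simp only [decideEntails, hdecode, Option.map_some, Option.getD_some, decide_eq_true_eq]
  exact RawInput.check_iff_entails fun a ha => hsig a (List.mem_toFinset.2 ha)

/-- BCQ entailment is decidable for the class `C = {R_M}`. -/
theorem stmt_12 :
    ∃ f : ℕ → Bool, Computable f ∧
      ∀ (M : TCM) (I q : Finset Atom), (∀ a ∈ I, InSig M a) →
        (f (Encodable.encode (encodeTCM M, I, q)) = true ↔
          Entails (RM M) (I : Set Atom) (q : Set Atom)) :=
  ⟨decideEntails, primrec_decideEntails.to_comp, fun _ _ _ => decideEntails_eq_true_iff⟩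

end
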